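/- arXiv:1203.3408 — 12 statements merged into one kernel-verified Lean document; each statement's English description precedes it below -/
import Mathlib

section
/- Let d ≥ 2 be an integer with d ≠ 6. Then there exists a positive integer a relatively prime to d such that 1/4 ≤ a/d ≤ 1/2; moreover, if d ∉ {2, 4}, then a can be chosen so that the inequalities are strict: 1/4 < a/d < 1/2. -/
/-!
The largest `a < d/2` coprime to `d` can be written down according to `d` modulo 4. In each case
`d = 2 * a + c` with `c = 1`, or with `a` odd and `c ∈ {2, 4}`; hence `gcd(a, d) = gcd(a, c) = 1`
and `a < d/2`, while `d < 4 * a` holds as soon as `c < 2 * a`, which fails only for `d = 2, 4, 6`.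
-/

lemma exists_coprime_quarter_half (d : ℕ) (hd : 2 ≤ d) (h2 : d ≠ 2) (h4 : d ≠ 4) (h6 : d ≠ 6) :
    ∃ a : ℕ, 0 < a ∧ Nat.Coprime a d ∧ d < 4 * a ∧ 2 * a < d := by
  have hodd (m : ℕ) : Nat.Coprime (2 * m + 3) 2 :=
    Nat.coprime_two_right.2 ⟨m + 1, by ring⟩
  have hcases : (∃ m, d = 2 * (m + 1) + 1) ∨ (∃ m, d = 2 * (2 * m + 3) + 2) ∨
      ∃ m, d = 2 * (2 * m + 3) + 2 ^ 2 := by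
    have h : d % 2 = 1 ∨ d % 4 = 0 ∨ d % 4 = 2 := by omega
    rcases h with h | h | h
    · exact .inl ⟨d / 2 - 1, by omega⟩
    · exact .inr (.inl ⟨d / 4 - 2, by omega⟩)
    · exact .inr (.inr ⟨d / 4 - 2, by omega⟩)
  rcases hcases with ⟨m, rfl⟩ | ⟨m, rfl⟩ | ⟨m, rfl⟩
  · exact ⟨m + 1, by omega, by simp, by omega, by omega⟩
  · exact ⟨2 * m + 3, by omega, (Nat.coprime_mul_right_add_right _ _ _).2 (hodd m),
      by omega, by omega⟩
  · exact ⟨2 * m + 3, by omega,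
      (Nat.coprime_mul_right_add_right _ _ _).2 ((hodd m).pow_right 2), by omega, by omega⟩


/-- Interval lemma, part (1): for every integer `d ≥ 2` with `d ≠ 6` there is a positive
integer `a` coprime to `d` with `1/4 ≤ a/d ≤ 1/2`, and if moreover `d ∉ {2, 4}` then `a`
can be chosen so that `1/4 < a/d < 1/2`. -/
theorem interval_lemma_one (d : ℕ) (hd : 2 ≤ d) (hd6 : d ≠ 6) :
    (∃ a : ℕ, 0 < a ∧ Nat.Coprime a d ∧
      (1 : ℚ) / 4 ≤ (a : ℚ) / (d : ℚ) ∧ (a : ℚ) / (d : ℚ) ≤ 1 / 2) ∧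
    (d ∉ ({2, 4} : Set ℕ) →
      ∃ a : ℕ, 0 < a ∧ Nat.Coprime a d ∧
        (1 : ℚ) / 4 < (a : ℚ) / (d : ℚ) ∧ (a : ℚ) / (d : ℚ) < 1 / 2) := by
  have strict : d ∉ ({2, 4} : Set ℕ) →
      ∃ a : ℕ, 0 < a ∧ Nat.Coprime a d ∧
        (1 : ℚ) / 4 < (a : ℚ) / (d : ℚ) ∧ (a : ℚ) / (d : ℚ) < 1 / 2 := by
    intro h
    obtain ⟨h2, h4⟩ : d ≠ 2 ∧ d ≠ 4 := by simpa using h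
    obtain ⟨a, ha, hc, hl, hu⟩ := exists_coprime_quarter_half d hd h2 h4 hd6
    have hdpos : (0 : ℚ) < d := by exact_mod_cast (by omega : 0 < d)
    have hl' : (d : ℚ) < 4 * a := by exact_mod_cast hl
    have hu' : 2 * (a : ℚ) < d := by exact_mod_cast hu
    refine ⟨a, ha, hc, ?_, ?_⟩
    · rw [lt_div_iff₀ hdpos]; linarith
    · rw [div_lt_iff₀ hdpos]; linarith
  refine ⟨?_, strict⟩
  by_cases h : d ∈ ({2, 4} : Set ℕ)
  · -- For `d = 2` and `d = 4`, `a = 1` attains one of the endpoints.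
    obtain rfl | rfl : d = 2 ∨ d = 4 := by simpa using h
    · exact ⟨1, by norm_num⟩
    · exact ⟨1, by norm_num⟩
  · obtain ⟨a, ha, hc, hl, hu⟩ := strict h
    exact ⟨a, ha, hc, hl.le, hu.le⟩
end

section
/- Let d ≥ 2 be an integer with d ∉ {4, 6, 10}. Then there exists a positive integer a relatively prime to d such that 1/3 ≤ a/d ≤ 1/2; moreover, if d ∉ {2, 3}, then a can be chosen so that the inequalities are strict: 1/3 < a/d < 1/2. -/
/-!
An explicit numerator just below `d / 2` works in each case: `a = k` for
`d = 2 k + 1`, and `a = 2 k - 1` for both `d = 4 k` and `d = 4 k + 2`. The difference `d - 2 a` is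
then 1, 2 or 4 respectively, so any common divisor of `a` and `d` divides a power of two, and in the
last two cases `a` is odd. The bound `d < 3 a` fails only for `d = 2, 3, 4, 6, 10`.
-/

/-- The numerator bounds with denominators cleared. -/
lemma exists_coprime_third_half (d : ℕ) (hd : 5 ≤ d) (h6 : d ≠ 6) (h10 : d ≠ 10) :
    ∃ a : ℕ, Nat.Coprime a d ∧ d < 3 * a ∧ 2 * a < d := by
  have key : ∀ a i : ℕ, (a % 2 = 1 ∨ i = 0) → Nat.Coprime a (2 * a + 2 ^ i) := by
    intro a i h
    rw [Nat.coprime_mul_right_add_right]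
    rcases h with h | rfl
    · exact Nat.Coprime.pow_right i (Nat.coprime_two_right.mpr (Nat.odd_iff.mpr h))
    · simp
  have hmod : d % 2 = 1 ∨ d % 4 = 0 ∨ d % 4 = 2 := by omega
  rcases hmod with h | h | h
  · refine ⟨d / 2, ?_, by omega, by omega⟩
    convert key (d / 2) 0 (Or.inr rfl) using 1
    omega
  · refine ⟨d / 2 - 1, ?_, by omega, by omega⟩
    convert key (d / 2 - 1) 1 (Or.inl (by omega)) using 1
    omega
  · refine ⟨d / 2 - 2, ?_, by omega, by omega⟩
    convert key (d / 2 - 2) 2 (Or.inl (by omega)) using 1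
    omega

/-- Interval lemma, part (2): for every integer `d ≥ 2` with `d ∉ {4, 6, 10}` there is a
positive integer `a` coprime to `d` with `1/3 ≤ a/d ≤ 1/2`, and if moreover `d ∉ {2, 3}`
then `a` can be chosen so that `1/3 < a/d < 1/2`. -/
theorem interval_lemma_two (d : ℕ) (hd : 2 ≤ d) (hd' : d ∉ ({4, 6, 10} : Set ℕ)) :
    (∃ a : ℕ, 0 < a ∧ Nat.Coprime a d ∧
      (1 : ℚ) / 3 ≤ (a : ℚ) / (d : ℚ) ∧ (a : ℚ) / (d : ℚ) ≤ 1 / 2) ∧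
    (d ∉ ({2, 3} : Set ℕ) →
      ∃ a : ℕ, 0 < a ∧ Nat.Coprime a d ∧
        (1 : ℚ) / 3 < (a : ℚ) / (d : ℚ) ∧ (a : ℚ) / (d : ℚ) < 1 / 2) := by
  simp only [Set.mem_insert_iff, Set.mem_singleton_iff, not_or] at hd' ⊢
  obtain ⟨h4, h6, h10⟩ := hd'
  have strict : ¬d = 2 ∧ ¬d = 3 → ∃ a : ℕ, 0 < a ∧ Nat.Coprime a d ∧
      (1 : ℚ) / 3 < (a : ℚ) / (d : ℚ) ∧ (a : ℚ) / (d : ℚ) < 1 / 2 := by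
    rintro ⟨h2, h3⟩
    obtain ⟨a, hc, hl, hu⟩ := exists_coprime_third_half d (by omega) h6 h10
    have hd0 : (0 : ℚ) < d := by exact_mod_cast (by omega : 0 < d)
    have hl' : (d : ℚ) < 3 * a := by exact_mod_cast hl
    have hu' : 2 * (a : ℚ) < d := by exact_mod_cast hu
    refine ⟨a, by omega, hc, ?_, ?_⟩
    · rw [div_lt_div_iff₀ (by norm_num) hd0]
      linarith
    · rw [div_lt_div_iff₀ hd0 (by norm_num)]
      linarith
  refine ⟨?_, strict⟩
  by_cases h23 : d = 2 ∨ d = 3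
  -- `1/2` and `1/3` are themselves the endpoints of the closed interval.
  · rcases h23 with rfl | rfl
    · exact ⟨1, by norm_num⟩
    · exact ⟨1, by norm_num⟩
  · obtain ⟨a, ha, hc, hl, hu⟩ := strict (not_or.mp h23)
    exact ⟨a, ha, hc, hl.le, hu.le⟩
end

section
/- Let d ≥ 2 be an integer with d ∉ {2, 3, 18}. Then there exists a positive integer a relatively prime to d such that 1/12 ≤ a/d ≤ 4/15; moreover, if d ≠ 12, then a can be chosen so that the inequalities are strict: 1/12 < a/d < 4/15. -/
/-!
In natural numbers the strict inequalities say `d < 12 * a` and `15 * a < 4 * d`, so the endpoints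
of the admissible range for `a` have ratio `16 / 5 > 3`. If `2 ∤ d` or `3 ∤ d`, a power of 2 or of 3
therefore lies in the range and is coprime to `d` (`exists_pow_of_coprime`). Otherwise `d = 6 * m`,
the range is `m / 2 < a < 8 * m / 5`, and one of `m ± 1`, `m ± 2`, chosen according to `m` mod 6,
is coprime to both `m` and `6` (`exists_of_six_mul`). The choice falls outside the range only for
`m = 1`, where `a = 1` works instead, and for `m = 2` and `m = 3`, that is `d = 12` and `d = 18`.
-/

/-- For `p ≤ 3` the largest power of `p` not exceeding `d / 4` is greater than `d / 12`. -/
lemma exists_pow_of_coprime {p d : ℕ} (hp : 1 < p) (hp3 : p ≤ 3) (hd : 4 ≤ d)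
    (h : Nat.Coprime p d) : ∃ a : ℕ, 0 < a ∧ Nat.Coprime a d ∧ d < 12 * a ∧ 15 * a < 4 * d := by
  have h1 : p ^ Nat.log p (d / 4) ≤ d / 4 := Nat.pow_log_le_self p (by omega)
  have h2 : d / 4 < p ^ (Nat.log p (d / 4) + 1) := Nat.lt_pow_succ_log_self hp _
  have h3 : 0 < p ^ Nat.log p (d / 4) := by positivity
  have h4 : p ^ (Nat.log p (d / 4) + 1) ≤ p ^ Nat.log p (d / 4) * 3 := by
    rw [pow_succ]
    exact Nat.mul_le_mul_left _ hp3
  exact ⟨_, h3, Nat.Coprime.pow_left _ h, by omega, by omega⟩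

lemma coprime_six_of_mod {a : ℕ} (h : a % 6 = 1 ∨ a % 6 = 5) : Nat.Coprime a 6 := by
  rw [Nat.Coprime, Nat.gcd_comm, Nat.gcd_rec]
  rcases h with h | h <;> rw [h] <;> norm_num

lemma exists_of_six_mul {m : ℕ} (hm : 0 < m) (h2 : m ≠ 2) (h3 : m ≠ 3) :
    ∃ a : ℕ, 0 < a ∧ Nat.Coprime a (6 * m) ∧ 6 * m < 12 * a ∧ 15 * a < 4 * (6 * m) := by
  by_cases h1 : m = 1
  · subst h1
    exact ⟨1, by norm_num⟩
  have key : m % 6 = 0 ∨ m % 6 = 4 ∨ m % 6 = 2 ∨ m % 6 = 3 ∨ m % 6 = 5 ∨ m % 6 = 1 := by omega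
  have odd_coprime : m % 2 = 1 → Nat.Coprime 2 m := fun h =>
    Nat.coprime_two_left.2 (Nat.odd_iff.2 h)
  rcases key with h | h | h | h | h | h
  · exact ⟨m + 1, by omega, (coprime_six_of_mod (by omega)).mul_right (by simp),
      by omega, by omega⟩
  · exact ⟨m + 1, by omega, (coprime_six_of_mod (by omega)).mul_right (by simp),
      by omega, by omega⟩
  · obtain ⟨n, rfl⟩ : ∃ n, m = n + 1 := ⟨m - 1, by omega⟩
    exact ⟨n, by omega, (coprime_six_of_mod (by omega)).mul_right (by simp),
      by omega, by omega⟩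
  · exact ⟨m + 2, by omega, (coprime_six_of_mod (by omega)).mul_right
      (by simpa using odd_coprime (by omega)), by omega, by omega⟩
  · exact ⟨m + 2, by omega, (coprime_six_of_mod (by omega)).mul_right
      (by simpa using odd_coprime (by omega)), by omega, by omega⟩
  · obtain ⟨n, rfl⟩ : ∃ n, m = n + 2 := ⟨m - 2, by omega⟩
    have hn : Nat.Coprime n 2 := Nat.coprime_two_right.2 (Nat.odd_iff.2 (by omega))
    exact ⟨n, by omega, (coprime_six_of_mod (by omega)).mul_right (by simpa using hn),
      by omega, by omega⟩

lemma exists_strict {d : ℕ} (hd : 4 ≤ d) (h12 : d ≠ 12) (h18 : d ≠ 18) :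
    ∃ a : ℕ, 0 < a ∧ Nat.Coprime a d ∧
      (1 : ℚ) / 12 < (a : ℚ) / (d : ℚ) ∧ (a : ℚ) / (d : ℚ) < 4 / 15 := by
  obtain ⟨a, ha, hc, hl, hu⟩ :
      ∃ a : ℕ, 0 < a ∧ Nat.Coprime a d ∧ d < 12 * a ∧ 15 * a < 4 * d := by
    by_cases h2 : 2 ∣ d
    · by_cases h3 : 3 ∣ d
      · obtain ⟨m, rfl⟩ : 6 ∣ d := by omega
        exact exists_of_six_mul (by omega) (by omega) (by omega)
      · exact exists_pow_of_coprime (by norm_num) le_rfl hd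
          ((Nat.Prime.coprime_iff_not_dvd Nat.prime_three).2 h3)
    · exact exists_pow_of_coprime (by norm_num) (by norm_num) hd
        ((Nat.Prime.coprime_iff_not_dvd Nat.prime_two).2 h2)
  have hd0 : (0 : ℚ) < d := by exact_mod_cast (by omega : 0 < d)
  have hl' : (d : ℚ) < 12 * a := by exact_mod_cast hl
  have hu' : 15 * (a : ℚ) < 4 * d := by exact_mod_cast hu
  refine ⟨a, ha, hc, ?_, ?_⟩
  · rw [div_lt_div_iff₀ (by norm_num) hd0]
    linarith
  · rw [div_lt_div_iff₀ hd0 (by norm_num)]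
    linarith

/-- Interval lemma, part (3): for every integer `d ≥ 2` with `d ∉ {2, 3, 18}` there is a
positive integer `a` coprime to `d` with `1/12 ≤ a/d ≤ 4/15`, and if moreover `d ≠ 12`
then `a` can be chosen so that `1/12 < a/d < 4/15`. -/
theorem interval_lemma_three (d : ℕ) (hd : 2 ≤ d) (hd' : d ∉ ({2, 3, 18} : Set ℕ)) :
    (∃ a : ℕ, 0 < a ∧ Nat.Coprime a d ∧
      (1 : ℚ) / 12 ≤ (a : ℚ) / (d : ℚ) ∧ (a : ℚ) / (d : ℚ) ≤ 4 / 15) ∧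
    (d ≠ 12 →
      ∃ a : ℕ, 0 < a ∧ Nat.Coprime a d ∧
        (1 : ℚ) / 12 < (a : ℚ) / (d : ℚ) ∧ (a : ℚ) / (d : ℚ) < 4 / 15) := by
  simp only [Set.mem_insert_iff, Set.mem_singleton_iff, not_or] at hd'
  obtain ⟨h2, h3, h18⟩ := hd'
  have strict := fun h12 : d ≠ 12 => exists_strict (d := d) (by omega) h12 h18
  refine ⟨?_, strict⟩
  by_cases h12 : d = 12
  · subst h12
    exact ⟨1, by norm_num⟩
  · obtain ⟨a, ha, hc, hl, hu⟩ := strict h12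
    exact ⟨a, ha, hc, hl.le, hu.le⟩
end

section
/- For each triple (d₁, d₂, d₃) in the list (2,4,6), (2,6,6), (3,6,6), (2,6,10), (4,6,12), there do not exist rational numbers a₁, a₂, a₃ with 0 < aᵢ ≤ 1/2 and with denominator of aᵢ (in lowest terms) equal to dᵢ for i = 1, 2, 3, satisfying the strict triangle inequalities a₁ < a₂ + a₃, a₂ < a₁ + a₃, and a₃ < a₁ + a₂. -/
/-!
A rational in `(0, 1/2]` of denominator `d` is `n / d` with `n` coprime to `d` and `0 < 2n ≤ d`
(`exists_coprime_num`). Hence the denominators 2, 3, 4, 6 each force the value `1 / d`, denominator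
10 leaves `1/10, 3/10`, and denominator 12 leaves `1/12, 5/12`. In every resulting triple the largest
entry is at least the sum of the other two; the inequality degenerates to an equality for
`1/3 = 1/6 + 1/6`, `1/4 = 1/6 + 1/12` and `5/12 = 1/4 + 1/6`.
-/

lemma exists_coprime_num {a : ℚ} {d : ℕ} (h : 0 < a ∧ a ≤ 1 / 2 ∧ a.den = d) :
    ∃ n : ℕ, 0 < n ∧ 2 * n ≤ d ∧ n.Coprime d ∧ a = n / d := by
  obtain ⟨hpos, hle, rfl⟩ := h
  have hnum : 0 < a.num := Rat.num_pos.mpr hpos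
  have hcast : ((a.num.natAbs : ℕ) : ℚ) = a.num := by
    rw [Nat.cast_natAbs, abs_of_pos hnum]
  have heq : a = (a.num.natAbs : ℚ) / a.den := by
    rw [hcast, Rat.num_div_den]
  refine ⟨a.num.natAbs, by omega, ?_, a.reduced, heq⟩
  have hden : (0 : ℚ) < a.den := by exact_mod_cast a.den_pos
  rw [heq, div_le_div_iff₀ hden two_pos] at hle
  have hle' : a.num.natAbs * 2 ≤ 1 * a.den := by exact_mod_cast hle
  omega

/-- For `d ∈ {2, 3, 4, 6}` the only residue coprime to `d` in `(0, d/2]` is `1`. -/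
lemma eq_one_div_of_den {a : ℚ} {d : ℕ} (hd : d = 2 ∨ d = 3 ∨ d = 4 ∨ d = 6)
    (h : 0 < a ∧ a ≤ 1 / 2 ∧ a.den = d) : a = 1 / d := by
  obtain ⟨n, hpos, hle, hcop, rfl⟩ := exists_coprime_num h
  have hn : n ≤ 3 := by omega
  rcases hd with rfl | rfl | rfl | rfl <;> interval_cases n <;> revert hcop hle <;> norm_num

lemma eq_of_den_ten {a : ℚ} (h : 0 < a ∧ a ≤ 1 / 2 ∧ a.den = 10) :
    a = 1 / 10 ∨ a = 3 / 10 := by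
  obtain ⟨n, hpos, hle, hcop, rfl⟩ := exists_coprime_num h
  have hn : n ≤ 5 := by omega
  interval_cases n <;> revert hcop <;> norm_num

lemma eq_of_den_twelve {a : ℚ} (h : 0 < a ∧ a ≤ 1 / 2 ∧ a.den = 12) :
    a = 1 / 12 ∨ a = 5 / 12 := by
  obtain ⟨n, hpos, hle, hcop, rfl⟩ := exists_coprime_num h
  have hn : n ≤ 6 := by omega
  interval_cases n <;> revert hcop <;> norm_num

/-- For each of the triples `(2,4,6)`, `(2,6,6)`, `(3,6,6)`, `(2,6,10)`, `(4,6,12)` there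
are no rational numbers `a₁, a₂, a₃ ∈ (0, 1/2]` whose denominators (in lowest terms) are
`d₁, d₂, d₃` respectively and which satisfy the strict triangle inequalities. -/
theorem no_rational_triangle (d₁ d₂ d₃ : ℕ)
    (h : (d₁, d₂, d₃) ∈
      [((2 : ℕ), (4 : ℕ), (6 : ℕ)), (2, 6, 6), (3, 6, 6), (2, 6, 10), (4, 6, 12)]) :
    ¬ ∃ a₁ a₂ a₃ : ℚ,
      (0 < a₁ ∧ a₁ ≤ 1 / 2 ∧ a₁.den = d₁) ∧
      (0 < a₂ ∧ a₂ ≤ 1 / 2 ∧ a₂.den = d₂) ∧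
      (0 < a₃ ∧ a₃ ≤ 1 / 2 ∧ a₃.den = d₃) ∧
      a₁ < a₂ + a₃ ∧ a₂ < a₁ + a₃ ∧ a₃ < a₁ + a₂ := by
  rintro ⟨a₁, a₂, a₃, h₁, h₂, h₃, t₁, t₂, t₃⟩
  simp only [List.mem_cons, Prod.mk.injEq, List.not_mem_nil, or_false] at h
  rcases h with ⟨rfl, rfl, rfl⟩ | ⟨rfl, rfl, rfl⟩ | ⟨rfl, rfl, rfl⟩ | ⟨rfl, rfl, rfl⟩ |
    ⟨rfl, rfl, rfl⟩
  all_goals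
    have e₁ := eq_one_div_of_den (by norm_num) h₁
    have e₂ := eq_one_div_of_den (by norm_num) h₂
    push_cast at e₁ e₂
  iterate 3
    · have e₃ := eq_one_div_of_den (by norm_num) h₃
      push_cast at e₃
      linarith
  · rcases eq_of_den_ten h₃ with e₃ | e₃ <;> linarith
  · rcases eq_of_den_twelve h₃ with e₃ | e₃ <;> linarith
end

section
/- Let n ≥ 1 and k ≥ 1 be integers and let x be an n×n complex matrix with x^k = 1. Then k times the complex dimension of the space {y ∈ M_n(ℂ) : xy = yx} of matrices commuting with x is at least n². -/
/-!
Since `X ^ k - 1` is squarefree over `ℂ`, the matrix `x` is diagonalizable: there is a basis of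
eigenvectors, with eigenvalues `d i` that are `k`-th roots of unity. Transported to this basis, the
elementary matrices `E i j` with `d i = d j` commute with `x`, so the commutant has dimension at
least the number of pairs with `d i = d j`, which is the sum of the squares of the eigenvalue
multiplicities. As there are at most `k` eigenvalues and the multiplicities add up to `n`,
Cauchy–Schwarz gives the bound.
-/

lemma exists_eigenbasis_of_pow_eq_one {n k : ℕ} (hk : 1 ≤ k)
    (x : Matrix (Fin n) (Fin n) ℂ) (hx : x ^ k = 1) :
    ∃ (b : Module.Basis (Fin n) ℂ (Fin n → ℂ)) (d : Fin n → ℂ),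
      (∀ i, Matrix.toLin' x (b i) = d i • b i) ∧ ∀ i, d i ^ k = 1 := by
  set f : Module.End ℂ (Fin n → ℂ) := Matrix.toLin' x with hf
  have hfk : f ^ k = 1 := by
    rw [hf, ← Matrix.toLin'_pow, hx, Matrix.toLin'_one]; rfl
  have hk0 : (k : ℂ) ≠ 0 := by exact_mod_cast (by omega : k ≠ 0)
  have hss : f.IsSemisimple := by
    refine Module.End.isSemisimple_of_squarefree_aeval_eq_zero
      (p := (Polynomial.X ^ k - 1 : Polynomial ℂ)) ?_ (by simp [hfk])
    exact (Polynomial.X_pow_sub_one_separable_iff.2 hk0).squarefree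
  have hspan : ⊤ ≤ Submodule.span ℂ {v : Fin n → ℂ | ∃ μ : ℂ, f v = μ • v} := by
    rw [← hss.iSup_eigenspace_eq_top]
    refine iSup_le fun μ v hv => Submodule.subset_span ⟨μ, ?_⟩
    exact Module.End.mem_eigenspace_iff.1 hv
  let b₀ := Module.Basis.ofSpan hspan
  have hb₀ : ∀ i, ∃ μ : ℂ, f (b₀ i) = μ • b₀ i := fun i =>
    Module.Basis.ofSpan_subset hspan ⟨i, rfl⟩
  let e := b₀.indexEquiv (Pi.basisFun ℂ (Fin n))
  let b := b₀.reindex e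
  have hb : ∀ i, ∃ μ : ℂ, f (b i) = μ • b i := fun i => by
    simpa [b] using hb₀ (e.symm i)
  choose d hd using hb
  refine ⟨b, d, hd, fun i => ?_⟩
  have hpow : ∀ m : ℕ, (f ^ m) (b i) = d i ^ m • b i := by
    intro m
    induction m with
    | zero => simp
    | succ m ih => rw [pow_succ', Module.End.mul_apply, ih, map_smul, hd, smul_smul, pow_succ]
  have h1 := hpow k
  rw [hfk, Module.End.one_apply] at h1
  have h2 : (d i ^ k - 1) • b i = 0 := by rw [sub_smul, one_smul, ← h1, sub_self]
  exact sub_eq_zero.1 ((smul_eq_zero.1 h2).resolve_right (b.ne_zero i))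

/-- Cauchy–Schwarz for the fibres of `d`, which takes at most `k` values. -/
lemma sq_le_mul_card_pairs {n k : ℕ} (hk : 1 ≤ k) (d : Fin n → ℂ) (hd : ∀ i, d i ^ k = 1) :
    n ^ 2 ≤ k * Fintype.card {p : Fin n × Fin n // d p.1 = d p.2} := by
  classical
  set s := Polynomial.nthRootsFinset k (1 : ℂ)
  have hmem : ∀ i, d i ∈ s := fun i => (Polynomial.mem_nthRootsFinset (by omega) _).2 (hd i)
  have hs : s.card ≤ k :=
    (Multiset.toFinset_card_le _).trans (Polynomial.card_nthRoots k (1 : ℂ))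
  let m : ℂ → ℕ := fun z => (Finset.univ.filter fun i => d i = z).card
  have hn : n = ∑ z ∈ s, m z := by
    simpa using Finset.card_eq_sum_card_fiberwise (s := (Finset.univ : Finset (Fin n)))
      (f := d) (t := s) (fun i _ => hmem i)
  have hp : Fintype.card {p : Fin n × Fin n // d p.1 = d p.2} = ∑ z ∈ s, m z ^ 2 := by
    rw [Fintype.card_subtype, Finset.card_eq_sum_card_fiberwise (f := fun p => d p.1) (t := s)
      (fun p _ => hmem p.1)]
    refine Finset.sum_congr rfl fun z _ => ?_
    rw [sq, ← Finset.card_product]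
    congr 1
    ext p
    simp only [Finset.mem_filter, Finset.mem_univ, true_and, Finset.mem_product]
    grind
  rw [hp]
  calc n ^ 2 = (∑ z ∈ s, m z) ^ 2 := by rw [← hn]
    _ ≤ s.card * ∑ z ∈ s, m z ^ 2 := sq_sum_le_card_mul_sum_sq
    _ ≤ k * ∑ z ∈ s, m z ^ 2 := Nat.mul_le_mul_right _ hs

/-- If `b` is an eigenbasis with eigenvalues `d i`, the elementary matrices `E i j` with
`d i = d j`, transported to the basis `b`, are linearly independent in the commutant. -/
lemma card_pairs_le_finrank_centralizer {n : ℕ} (x : Matrix (Fin n) (Fin n) ℂ)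
    (b : Module.Basis (Fin n) ℂ (Fin n → ℂ)) (d : Fin n → ℂ)
    (hb : ∀ i, Matrix.toLin' x (b i) = d i • b i) :
    Fintype.card {p : Fin n × Fin n // d p.1 = d p.2} ≤ Module.finrank ℂ
      (Subalgebra.centralizer ℂ ({x} : Set (Matrix (Fin n) (Fin n) ℂ))) := by
  classical
  -- conjugation by the change of basis from `b` to the standard basis
  let φ : Matrix (Fin n) (Fin n) ℂ ≃ₐ[ℂ] Matrix (Fin n) (Fin n) ℂ :=
    (Matrix.toLinAlgEquiv b).trans LinearMap.toMatrixAlgEquiv'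
  have hφ : φ (Matrix.diagonal d) = x := by
    have h : Matrix.toLinAlgEquiv b (Matrix.diagonal d) = Matrix.toLinAlgEquiv' x := by
      refine b.ext fun i => ?_
      rw [Matrix.toLinAlgEquiv_self]
      refine Eq.trans ?_ (hb i).symm
      simp [Matrix.diagonal_apply, ite_smul]
    change LinearMap.toMatrixAlgEquiv' (Matrix.toLinAlgEquiv b (Matrix.diagonal d)) = x
    rw [h, LinearMap.toMatrixAlgEquiv'_toLinAlgEquiv']
  let v : {p : Fin n × Fin n // d p.1 = d p.2} →
      Subalgebra.centralizer ℂ ({x} : Set (Matrix (Fin n) (Fin n) ℂ)) := fun p =>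
    ⟨φ (Matrix.single p.1.1 p.1.2 1), by
      rw [Subalgebra.mem_centralizer_iff]
      rintro _ rfl
      rw [← hφ, ← map_mul, ← map_mul]
      congr 1
      ext i j
      have := p.2
      simp only [Matrix.diagonal_mul, Matrix.mul_diagonal, Matrix.single_apply]
      split_ifs with h
      · rw [← h.1, ← h.2, this, mul_comm]
      · simp⟩
  have hv : LinearIndependent ℂ v := by
    refine LinearIndependent.of_comp (Subalgebra.val _).toLinearMap ?_
    have h1 := (Matrix.stdBasis ℂ (Fin n) (Fin n)).linearIndependent.map'
      φ.toLinearMap (LinearMap.ker_eq_bot.2 φ.injective)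
    have h2 := h1.comp (fun p : {p : Fin n × Fin n // d p.1 = d p.2} => p.1)
      Subtype.val_injective
    have h3 : ⇑(Subalgebra.val (Subalgebra.centralizer ℂ
        ({x} : Set (Matrix (Fin n) (Fin n) ℂ)))).toLinearMap ∘ v =
        (φ.toLinearMap ∘ Matrix.stdBasis ℂ (Fin n) (Fin n)) ∘ fun p => p.1 := by
      funext p
      exact congrArg φ (Matrix.stdBasis_eq_single ℂ p.1.1 p.1.2).symm
    rw [h3]
    exact h2
  exact hv.fintype_card_le_finrank

/-- If `x` is an `n × n` complex matrix with `x ^ k = 1`, then `k` times the dimension of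
the algebra of matrices commuting with `x` is at least `n²`. -/
theorem sq_le_mul_finrank_centralizer (n k : ℕ) (hn : 1 ≤ n) (hk : 1 ≤ k)
    (x : Matrix (Fin n) (Fin n) ℂ) (hx : x ^ k = 1) :
    n ^ 2 ≤ k * Module.finrank ℂ
      (Subalgebra.centralizer ℂ ({x} : Set (Matrix (Fin n) (Fin n) ℂ))) := by
  obtain ⟨b, d, hb, hd⟩ := exists_eigenbasis_of_pow_eq_one hk x hx
  exact (sq_le_mul_card_pairs hk d hd).trans
    (Nat.mul_le_mul_left k (card_pairs_le_finrank_centralizer x b d hb))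
end

section
/- Let 𝔤 be a finite-dimensional semisimple Lie algebra over ℂ, let 𝔥 ⊆ 𝔤 be a Cartan subalgebra, let k ≥ 1 be an integer, and let α be a Lie algebra automorphism of 𝔤 with α^k = id. Then the fixed-point subalgebra 𝔤^α = {x ∈ 𝔤 : α(x) = x} satisfies dim 𝔤^α ≥ (dim 𝔤)/k − (3/2)·dim 𝔥; equivalently, 2k·dim 𝔤^α ≥ 2·dim 𝔤 − 3k·dim 𝔥. -/
/-!
The bound proved here is stronger than the one stated: if `α ^ k = 1`, then
`dim L ≤ k * (dim L^α + rank L)`. As `α` is diagonalizable with eigenvalues among the `k`-th roots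
of unity, it suffices to show `dim E(μ⁻¹) ≤ dim E(1) + rank L` for every `μ` with `μ ^ k = 1`, where
`E(μ)` is the `μ`-eigenspace of `α` (`finrank_eigenspace_inv_le`). For `x ∈ E(μ)`, the map `ad x`
sends `E(μ⁻¹)` to `E(1)`, so what is needed is an `x` for which the kernel of `ad x` on `E(μ⁻¹)` has
dimension at most `rank L`.

*Choice of `x`* (`exists_generic`). Among the semisimple elements of `E(μ)` pick `s` with centralizer
`l` of minimal dimension. By minimality, every semisimple element of `E(μ)` that commutes with `s`
is central in `l`, and therefore `V = [l, l] ∩ E(μ)` consists of nilpotent elements. Pick `e ∈ V`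
whose centralizer in `l` has minimal dimension, and put `x = s + e`. If `y ∈ E(μ⁻¹)` commutes with
`x`, it commutes with `s` and with `e`. An infinitesimal form of the minimality of `e`, combined with
an `sl₂`-type relation `[h, e] = 2e`, `h = [e, f]`, shows that the centralizer of `e` in `l` is
orthogonal to `V` for the Killing form (`exists_generic_nilpotent`). Averaging over the powers of `α`
upgrades this to `y ⊥ [l, l]`, so `y` lies in the centre of `l`.

*The centre of `l` has dimension at most the rank* (`finrank_doubleCentralizer_le`). For an isotropic
subspace `N` of `L` consisting of nilpotent elements, `2 dim N + dim Z(l) ≤ dim L`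
(`finrank_le_of_isotropic`). Applying this to the sums of the positive and of the negative
eigenspaces of `ad y`, for a regular element `y` of the Cartan subalgebra, gives the bound. Positivity
of complex numbers refers to the lexicographic order on `ℂ = ℝ × ℝ`.
-/

open Module LieAlgebra

/-! ### Linear algebra and the Jordan decomposition -/

/-- If `E` commutes with `C = [E, Z]`, then `[E ^ (i + 1), Z] = (i + 1) C E ^ i`. -/
lemma pow_mul_comm_aux {A : Type*} [Ring A] {E Z C : A} (hC : C = E * Z - Z * E)
    (hEC : Commute E C) (i : ℕ) :
    E ^ (i + 1) * Z = Z * E ^ (i + 1) + (i + 1 : ℕ) • (C * E ^ i) := by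
  have h : E * Z = Z * E + C := by rw [hC]; abel
  induction i with
  | zero => simp [h]
  | succ i ih =>
    rw [pow_succ' E (i + 1), mul_assoc, ih, mul_add, ← mul_assoc, h, add_mul, mul_smul_comm,
      ← mul_assoc E C, hEC.eq, mul_assoc C E, ← pow_succ', mul_assoc Z, ← pow_succ',
      succ_nsmul _ (i + 1)]
    abel

/-- If `E` is nilpotent and commutes with `C = [E, Z]`, then `E Z` is nilpotent. By an argument of
Jacobson, `C` is nilpotent on `ker E`, and `E Z` preserves the filtration of `V` by the kernels of
the powers of `E`, acting on the image under `E ^ i` of the `i`-th layer as `(i + 1) C`. -/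
lemma isNilpotent_mul_of_double_commutator {V : Type*} [AddCommGroup V] [Module ℂ V]
    {E Z : End ℂ V} (hE : IsNilpotent E) (hC : Commute E (E * Z - Z * E)) :
    IsNilpotent (E * Z) := by
  obtain ⟨N, hN⟩ := hE
  obtain ⟨C, hCdef⟩ : ∃ C, C = E * Z - Z * E := ⟨_, rfl⟩
  rw [← hCdef] at hC
  have key : ∀ (i : ℕ) v, (E ^ (i + 1)) (Z v) = Z ((E ^ (i + 1)) v) + ((i : ℂ) + 1) • C ((E ^ i) v) := by
    intro i v
    have := LinearMap.congr_fun (pow_mul_comm_aux hCdef hC i) v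
    simp only [Module.End.mul_apply, LinearMap.add_apply, LinearMap.smul_apply] at this
    rw [this, ← Nat.cast_smul_eq_nsmul ℂ]
    push_cast
    rfl
  have hCE : ∀ v, E (C v) = C (E v) := fun v => LinearMap.congr_fun hC.eq v
  have hCEn : ∀ n v, (E ^ n) (C v) = C ((E ^ n) v) := fun n v =>
    LinearMap.congr_fun (hC.pow_left n).eq v
  have kerC : ∀ n v, E v = 0 → E ((C ^ n) v) = 0 := by
    intro n
    induction n with
    | zero => intro v hv; simpa using hv
    | succ n ih =>
      intro v hv
      rw [pow_succ, Module.End.mul_apply]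
      exact ih _ (by rw [hCE, hv, map_zero])
  have imC : ∀ n v, E v = 0 → ∃ u, (E ^ n) u = (C ^ n) v := by
    intro n
    induction n with
    | zero => intro v hv; exact ⟨v, rfl⟩
    | succ n ih =>
      intro v hv
      obtain ⟨u, hu⟩ := ih v hv
      have h1 : (E ^ (n + 1)) u = 0 := by
        rw [pow_succ', Module.End.mul_apply, hu, kerC n v hv]
      refine ⟨((n : ℂ) + 1)⁻¹ • Z u, ?_⟩
      rw [map_smul, key, h1, map_zero, zero_add, smul_smul, inv_mul_cancel₀, one_smul, hu,
        pow_succ' C, Module.End.mul_apply]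
      exact_mod_cast n.succ_ne_zero
  have CN : ∀ v, E v = 0 → (C ^ N) v = 0 := by
    intro v hv
    obtain ⟨u, hu⟩ := imC N v hv
    rw [← hu, hN, LinearMap.zero_apply]
  have step : ∀ (i n : ℕ) v, (E ^ (i + 1)) v = 0 →
      (E ^ (i + 1)) (((E * Z) ^ n) v) = 0 ∧
      (E ^ i) (((E * Z) ^ n) v) = ((i : ℂ) + 1) ^ n • (C ^ n) ((E ^ i) v) := by
    intro i n v hv
    induction n with
    | zero => simpa using hv
    | succ n ih =>
      obtain ⟨h1, h2⟩ := ih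
      have h3 : (E ^ i) (((E * Z) ^ (n + 1)) v)
          = ((i : ℂ) + 1) ^ (n + 1) • (C ^ (n + 1)) ((E ^ i) v) := by
        rw [pow_succ' (E * Z), Module.End.mul_apply, Module.End.mul_apply,
          ← Module.End.mul_apply (E ^ i) E, ← pow_succ, key, h1, map_zero, zero_add, h2, map_smul,
          smul_smul, ← pow_succ', pow_succ' C, Module.End.mul_apply]
      refine ⟨?_, h3⟩
      rw [pow_succ' E, Module.End.mul_apply, h3, map_smul, kerC, smul_zero]
      rw [← Module.End.mul_apply, ← pow_succ', hv]
  have fin : ∀ i v, (E ^ i) v = 0 → ((E * Z) ^ (N * i)) v = 0 := by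
    intro i
    induction i with
    | zero => intro v hv; simpa using hv
    | succ i ih =>
      intro v hv
      rw [mul_add, mul_one, pow_add, Module.End.mul_apply]
      apply ih
      rw [(step i N v hv).2, CN, smul_zero]
      rw [← Module.End.mul_apply, ← pow_succ', hv]
  exact ⟨N * N, LinearMap.ext fun v => fin N v (by rw [hN]; rfl)⟩

/-- First-order consequence of the maximality of the rank of `A` on a line of linear maps through
`A`: the derivative along the line maps `ker A` into `range A`. Otherwise, for small `ε ≠ 0`, a
vector of its image outside `range A` together with perturbed basis vectors of `range A` gives
`rank A + 1` independent vectors in the range of the perturbed map. -/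
lemma mem_range_of_rank_le {U W : Type*} [AddCommGroup U] [Module ℂ U] [AddCommGroup W]
    [Module ℂ W] [Module.Finite ℂ U] [Module.Finite ℂ W] (A A' : U →ₗ[ℂ] W)
    (hr : ∀ ε : ℂ, finrank ℂ (LinearMap.range (A + ε • A')) ≤ finrank ℂ (LinearMap.range A))
    {z : U} (hz : A z = 0) : A' z ∈ LinearMap.range A := by
  by_contra hcon
  let r := finrank ℂ (LinearMap.range A)
  let b := finBasis ℂ (LinearMap.range A)
  have hb : ∀ i, ∃ u, A u = b i := fun i => (b i).2
  choose u hu using hb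
  have hbli : LinearIndependent ℂ (fun i => ((b i : LinearMap.range A) : W)) :=
    b.linearIndependent.map' (LinearMap.range A).subtype (Submodule.ker_subtype _)
  have hspan : Submodule.span ℂ (Set.range (fun i => ((b i : LinearMap.range A) : W)))
      ≤ LinearMap.range A := by
    rw [Submodule.span_le]
    rintro _ ⟨i, rfl⟩
    exact (b i).2
  let w : ℂ → Fin (r + 1) → W := fun ε => Fin.cons (A' z) (fun i => (A + ε • A') (u i))
  have hw0 : LinearIndependent ℂ (w 0) := by
    have : w 0 = Fin.cons (A' z) (fun i => ((b i : LinearMap.range A) : W)) := by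
      simp only [w, zero_smul, add_zero, hu]; rfl
    rw [this, linearIndependent_finCons]
    exact ⟨hbli, fun h => hcon (hspan h)⟩
  obtain ⟨g, hg⟩ := LinearMap.exists_leftInverse_of_injective
    (Fintype.linearCombination ℂ (w 0)) (LinearMap.ker_eq_bot.mpr (linearIndependent_iff_injective_fintypeLinearCombination.mp hw0))
  let M : ℂ → Matrix (Fin (r + 1)) (Fin (r + 1)) ℂ := fun ε => Matrix.of fun i => g (w ε i)
  have hM0 : (M 0).det = 1 := by
    have : M 0 = 1 := by
      ext i j
      have := LinearMap.congr_fun hg (Pi.single i 1)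
      simp [Fintype.linearCombination_apply_single] at this
      simp [M, this, Matrix.one_apply, Pi.single_apply, eq_comm]
    rw [this, Matrix.det_one]
  have hcont : Continuous fun ε => (M ε).det := by
    apply Continuous.matrix_det
    refine continuous_pi fun i => continuous_pi fun j => ?_
    refine Fin.cases ?_ (fun i => ?_) i
    · simp only [M, w, Matrix.of_apply, Fin.cons_zero]; fun_prop
    · simp only [M, w, Matrix.of_apply, Fin.cons_succ, LinearMap.add_apply, LinearMap.smul_apply,
        map_add, map_smul, Pi.add_apply, Pi.smul_apply, smul_eq_mul]; fun_prop
  have hev : ∀ᶠ ε in nhds (0 : ℂ), (M ε).det ≠ 0 :=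
    hcont.continuousAt.eventually_ne (by rw [hM0]; exact one_ne_zero)
  obtain ⟨ε, hε, hε0⟩ := ((hev.filter_mono nhdsWithin_le_nhds).and
    (self_mem_nhdsWithin : _ ∈ nhdsWithin (0 : ℂ) {0}ᶜ)).exists
  have hε0 : ε ≠ 0 := hε0
  have hli : LinearIndependent ℂ (w ε) := by
    have h1 : LinearIndependent ℂ (fun i => M ε i) :=
      Matrix.linearIndependent_rows_of_det_ne_zero hε
    exact LinearIndependent.of_comp g h1
  have hmem : ∀ i, w ε i ∈ LinearMap.range (A + ε • A') := by
    refine Fin.cases ⟨ε⁻¹ • z, ?_⟩ (fun i => ⟨u i, ?_⟩)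
    · simp [w, hz, hε0]
    · simp [w]
  have hcard := LinearIndependent.fintype_card_le_finrank
    (LinearIndependent.of_comp (LinearMap.range (A + ε • A')).subtype
      (v := fun i => (⟨w ε i, hmem i⟩ : LinearMap.range (A + ε • A'))) hli)
  have := hr ε
  rw [Fintype.card_fin] at hcard
  omega

/-- The abstract Jordan decomposition: the semisimple part of `ad x` is a derivation, hence inner.
-/
lemma jordan {L : Type*} [LieRing L] [LieAlgebra ℂ L] [Module.Finite ℂ L] [IsKilling ℂ L] (x : L) :
    ∃ n s : L, x = n + s ∧ IsNilpotent (ad ℂ L n) ∧ (ad ℂ L s).IsSemisimple ∧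
      ad ℂ L n ∈ Algebra.adjoin ℂ {ad ℂ L x} ∧ ad ℂ L s ∈ Algebra.adjoin ℂ {ad ℂ L x} := by
  obtain ⟨N, hN₀, S, hS₀, hN, hS, hSN⟩ := (ad ℂ L x).exists_isNilpotent_isSemisimple
  have hcomm : Commute (ad ℂ L x) S := Algebra.commute_of_mem_adjoin_self hS₀
  have hN' : IsNilpotent (ad ℂ L x - S) := by rwa [hSN, add_sub_cancel_right]
  have aux {a : ℂ} {y : L} (hy : y ∈ (ad ℂ L x).maxGenEigenspace a) : S y = a • y := by
    rw [End.maxGenEigenspace_eq] at hy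
    rw [End.apply_eq_of_mem_of_comm_of_isFinitelySemisimple_of_isNil hy hcomm
      hS.isFinitelySemisimple hN']
  have htop := End.iSup_maxGenEigenspace_eq_top (ad ℂ L x)
  have h_der (y z : L) : S ⁅y, z⁆ = ⁅S y, z⁆ + ⁅y, S z⁆ := by
    have hy : y ∈ ⨆ a, (ad ℂ L x).maxGenEigenspace a := by simp [htop]
    have hz : z ∈ ⨆ a, (ad ℂ L x).maxGenEigenspace a := by simp [htop]
    induction hy using Submodule.iSup_induction' with
    | mem a y hy =>
      induction hz using Submodule.iSup_induction' with
      | mem b z hz =>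
        have hyz : ⁅y, z⁆ ∈ (ad ℂ L x).maxGenEigenspace (a + b) :=
          LieModule.lie_mem_maxGenEigenspace_toEnd hy hz
        rw [aux hy, aux hz, aux hyz, smul_lie, lie_smul, ← add_smul]
      | zero => simp
      | add _ _ _ _ h h' => simp only [lie_add, map_add, h, h']; abel
    | zero => simp
    | add _ _ _ _ h h' => simp only [add_lie, map_add, h, h']; abel
  replace h_der : ∀ y z : L, S ⁅y, z⁆ = ⁅y, S z⁆ - ⁅z, S y⁆ := by
    simp_rw [← lie_skew (S _) _, add_comm, ← sub_eq_add_neg] at h_der; assumption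
  let S' : LieDerivation ℂ L L := ⟨S, h_der⟩
  obtain ⟨s, hs⟩ := LieDerivation.IsKilling.exists_eq_ad S'
  have hs : ad ℂ L s = S := by rw [← LieDerivation.coe_ad_apply_eq_ad_apply s, hs]
  have hn : ad ℂ L (x - s) = N := by rw [map_sub, hs, hSN, add_sub_cancel_right]
  exact ⟨x - s, s, by abel, hn ▸ hN, hs ▸ hS, hn ▸ hN₀, hs ▸ hS₀⟩

/-! ### Generic elements of a space of nilpotent elements -/

section
variable {g : Type*} [LieRing g] [LieAlgebra ℂ g]

/-- The commutation relation between `(ad e) ^ (n + 1)` and `ad f`, which needs only `[e, f] = h`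
and `[h, e] = 2e`. -/
lemma sl2_aux {e f h : g} (hef : ⁅e, f⁆ = h) (hhe : ⁅h, e⁆ = (2 : ℂ) • e) (n : ℕ) (u : g) :
    (ad ℂ g e ^ (n + 1)) ⁅f, u⁆ = ⁅f, (ad ℂ g e ^ (n + 1)) u⁆ +
      ((n : ℂ) + 1) • (⁅h, (ad ℂ g e ^ n) u⁆ - (n : ℂ) • (ad ℂ g e ^ n) u) := by
  have h1 : ∀ w : g, ⁅e, ⁅f, w⁆⁆ = ⁅f, ⁅e, w⁆⁆ + ⁅h, w⁆ := fun w => by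
    rw [leibniz_lie, hef, add_comm]
  have h2 : ∀ w : g, ⁅e, ⁅h, w⁆⁆ = ⁅h, ⁅e, w⁆⁆ - (2 : ℂ) • ⁅e, w⁆ := fun w => by
    rw [leibniz_lie h e w, hhe, smul_lie]; abel
  induction n with
  | zero => simp [h1]
  | succ n ih =>
    have hE : ∀ (m : ℕ) (w : g), (ad ℂ g e ^ (m + 1)) w = ⁅e, (ad ℂ g e ^ m) w⁆ := fun m w => by
      rw [pow_succ', Module.End.mul_apply, ad_apply]
    rw [hE (n + 1), ih, lie_add, h1, lie_smul, lie_sub, h2, lie_smul, ← hE, ← hE]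
    push_cast
    module

/-- On the centralizer of `e`, the operator `ad h` does not have the eigenvalue `-2`: a
corresponding eigenvector would lie in the range of every power of `ad e`. -/
lemma eq_zero_of_sl2_aux {e f h : g} (hef : ⁅e, f⁆ = h) (hhe : ⁅h, e⁆ = (2 : ℂ) • e)
    (hnil : IsNilpotent (ad ℂ g e)) {y : g} (hey : ⁅e, y⁆ = 0) (hhy : (2 : ℂ) • y + ⁅h, y⁆ = 0) :
    y = 0 := by
  have hmem : ∀ n : ℕ, ∃ u, (ad ℂ g e ^ n) u = y := by
    intro n
    induction n with
    | zero => exact ⟨y, rfl⟩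
    | succ n ih =>
      obtain ⟨u, hu⟩ := ih
      have h0 : (ad ℂ g e ^ (n + 1)) u = 0 := by
        rw [pow_succ', Module.End.mul_apply, ad_apply, hu, hey]
      have h1 := sl2_aux hef hhe n u
      have h2 : ⁅h, y⁆ = -((2 : ℂ) • y) := by rw [eq_neg_iff_add_eq_zero, add_comm, hhy]
      rw [h0, lie_zero, zero_add, hu, h2] at h1
      have hne : ((n : ℂ) + 1) * (-2 - n) ≠ 0 := by
        have h3 : (n : ℂ) + 1 ≠ 0 := by exact_mod_cast n.succ_ne_zero
        have h4 : (n : ℂ) + 2 ≠ 0 := by exact_mod_cast (n + 1).succ_ne_zero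
        have h5 : (-2 - n : ℂ) = -(n + 2) := by ring
        rw [h5]
        exact mul_ne_zero h3 (neg_ne_zero.mpr h4)
      refine ⟨(((n : ℂ) + 1) * (-2 - n))⁻¹ • ⁅f, u⁆, ?_⟩
      rw [map_smul, h1, inv_smul_eq_iff₀ hne]
      module
  obtain ⟨N, hN⟩ := hnil
  obtain ⟨u, hu⟩ := hmem N
  rw [← hu, hN, LinearMap.zero_apply]

variable [Module.Finite ℂ g] {M : Type*} [AddCommGroup M] [Module ℂ M] [LieRingModule g M]
  [LieModule ℂ g M] [Module.Finite ℂ M]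

open LieModule (traceForm toEnd)

lemma traceForm_nondegenerate_of (hB : ∀ y : g, (∀ z, traceForm ℂ g M y z = 0) → y = 0) :
    (traceForm ℂ g M).Nondegenerate := by
  refine ⟨fun y hy => hB y hy, fun y hy => hB y fun z => ?_⟩
  rw [LieModule.traceForm_comm]; exact hy z

/-- The part of the Jacobson-Morozov theorem needed here: `e` lies in the range of `(ad e) ^ 2`,
because it is orthogonal to the kernel of `(ad e) ^ 2`. -/
lemma exists_sl2_aux (hB : ∀ y : g, (∀ z, traceForm ℂ g M y z = 0) → y = 0) {e : g}
    (he : IsNilpotent (toEnd ℂ g M e)) :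
    ∃ f h : g, ⁅e, f⁆ = h ∧ ⁅h, e⁆ = (2 : ℂ) • e := by
  let T : g →ₗ[ℂ] g := ad ℂ g e ∘ₗ ad ℂ g e
  have hmem : e ∈ LinearMap.range T := by
    have hrefl : (traceForm ℂ g M).IsRefl := (LieModule.traceForm_isSymm ℂ g M).isRefl
    rw [← LinearMap.BilinForm.orthogonal_orthogonal (traceForm_nondegenerate_of hB) hrefl
      (LinearMap.range T), LinearMap.BilinForm.mem_orthogonal_iff]
    intro z hz
    rw [LinearMap.BilinForm.mem_orthogonal_iff] at hz
    have hTz : ⁅e, ⁅e, z⁆⁆ = 0 := by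
      refine hB _ fun y => ?_
      have := hz (T y) ⟨y, rfl⟩
      simp only [T, LinearMap.comp_apply, ad_apply] at this
      rw [LieModule.traceForm_apply_lie_apply', LieModule.traceForm_apply_lie_apply'] at this
      rw [LieModule.traceForm_comm]
      simpa using this
    rw [LieModule.traceForm_comm, LieModule.traceForm_apply_apply]
    refine (LinearMap.isNilpotent_trace_of_isNilpotent ?_).eq_zero
    refine isNilpotent_mul_of_double_commutator he ?_
    have h1 : toEnd ℂ g M e * toEnd ℂ g M z - toEnd ℂ g M z * toEnd ℂ g M e
        = toEnd ℂ g M ⁅e, z⁆ := by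
      ext m; simp
    rw [h1, commute_iff_eq, ← sub_eq_zero]
    ext m
    have h2 : ⁅⁅e, ⁅e, z⁆⁆, m⁆ = 0 := by rw [hTz, zero_lie]
    rw [lie_lie e] at h2
    simpa using h2
  obtain ⟨f, hf⟩ := hmem
  refine ⟨(-2 : ℂ) • f, _, rfl, ?_⟩
  have hf : ⁅e, ⁅e, f⁆⁆ = e := hf
  rw [lie_smul, smul_lie, ← lie_skew, hf]
  module

/-- In a space `V` of nilpotent elements, an element `e` with centralizer of minimal dimension has
its centralizer orthogonal to `V`. Applied to `z ↦ ([x, z], B(x, z))`, which has the same kernel as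
`ad x` for nilpotent `x`, minimality shows that `V` is orthogonal to the image of `2 + ad h` on the
centralizer of `e`; that operator is invertible there. -/
lemma exists_generic_nilpotent (hB : ∀ y : g, (∀ z, traceForm ℂ g M y z = 0) → y = 0)
    (V : Submodule ℂ g) (hV : ∀ v ∈ V, IsNilpotent (toEnd ℂ g M v))
    (hV' : ∀ v ∈ V, IsNilpotent (ad ℂ g v)) :
    ∃ e ∈ V, ∀ z : g, ⁅e, z⁆ = 0 → ∀ v ∈ V, traceForm ℂ g M v z = 0 := by
  obtain ⟨e, he, hmin⟩ := (measure fun x : g => finrank ℂ (LinearMap.ker (ad ℂ g x))).wf.has_min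
    (V : Set g) ⟨0, V.zero_mem⟩
  refine ⟨e, he, ?_⟩
  obtain ⟨f, h, hef, hhe⟩ := exists_sl2_aux hB (hV e he)
  let A : g → g →ₗ[ℂ] g × ℂ := fun x => (ad ℂ g x : g →ₗ[ℂ] g).prod (traceForm ℂ g M x)
  have hker : ∀ x ∈ V, LinearMap.ker (A x) = LinearMap.ker (ad ℂ g x) := by
    intro x hx
    ext z
    simp only [A, LinearMap.ker_prod, Submodule.mem_inf, LinearMap.mem_ker, and_iff_left_iff_imp,
      ad_apply]
    intro hz
    rw [LieModule.traceForm_apply_apply]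
    refine (LinearMap.isNilpotent_trace_of_isNilpotent ?_).eq_zero
    refine Commute.isNilpotent_mul_right ?_ (hV x hx)
    rw [commute_iff_eq, ← sub_eq_zero]
    ext m
    have h2 : ⁅⁅x, z⁆, m⁆ = 0 := by rw [hz, zero_lie]
    rw [lie_lie] at h2
    simpa using h2
  have hrank : ∀ v ∈ V, ∀ ε : ℂ, finrank ℂ (LinearMap.range (A e + ε • A v)) ≤
      finrank ℂ (LinearMap.range (A e)) := by
    intro v hv ε
    have h1 : A e + ε • A v = A (e + ε • v) := by
      ext z <;> simp [A]
    have hm : e + ε • v ∈ V := V.add_mem he (V.smul_mem ε hv)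
    have h2 := (A e).finrank_range_add_finrank_ker
    have h3 := (A (e + ε • v)).finrank_range_add_finrank_ker
    have h4 := hmin _ hm
    rw [hker _ he] at h2
    rw [hker _ hm] at h3
    rw [h1]
    simp only [WellFoundedRelation.rel, InvImage, not_lt] at h4
    have h5 : finrank ℂ (LinearMap.ker (ad ℂ g e)) ≤
      finrank ℂ (LinearMap.ker (ad ℂ g (e + ε • v))) := by simpa using h4
    omega
  have hfirst : ∀ v ∈ V, ∀ z : g, ⁅e, z⁆ = 0 → traceForm ℂ g M v ((2 : ℂ) • z + ⁅h, z⁆) = 0 := by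
    intro v hv z hz
    have hz' : A e z = 0 := by
      rw [← LinearMap.mem_ker, hker e he]; exact hz
    obtain ⟨z₁, hz₁⟩ := mem_range_of_rank_le (A e) (A v) (hrank v hv) hz'
    have h1 : ⁅e, z₁⁆ = ⁅v, z⁆ := congrArg Prod.fst hz₁
    have h2 : traceForm ℂ g M e z₁ = traceForm ℂ g M v z := congrArg Prod.snd hz₁
    have h3 : (2 : ℂ) * traceForm ℂ g M e z₁ = traceForm ℂ g M h ⁅v, z⁆ := by
      rw [← h1, ← LieModule.traceForm_apply_lie_apply, hhe]; simp
    have h4 : traceForm ℂ g M h ⁅v, z⁆ = - traceForm ℂ g M v ⁅h, z⁆ := by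
      rw [← LieModule.traceForm_apply_lie_apply, LieModule.traceForm_apply_lie_apply']
    rw [map_add, map_smul, smul_eq_mul, ← h2, h3, h4]
    ring
  have hKe : ∀ z ∈ LinearMap.ker (ad ℂ g e),
      ((2 : ℂ) • (LinearMap.id : g →ₗ[ℂ] g) + (ad ℂ g h : g →ₗ[ℂ] g)) z ∈ LinearMap.ker (ad ℂ g e) := by
    intro z hz
    have hz : ⁅e, z⁆ = 0 := hz
    simp only [LinearMap.mem_ker, LinearMap.add_apply, LinearMap.smul_apply, LinearMap.id_apply,
      ad_apply, lie_add, lie_smul, hz]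
    rw [leibniz_lie, hz, ← lie_skew e h, hhe]
    simp [hz]
  let R := LinearMap.restrict _ hKe
  have hinj : Function.Injective R := by
    rw [← LinearMap.ker_eq_bot, LinearMap.ker_eq_bot']
    rintro ⟨z, hz⟩ hRz
    have : (2 : ℂ) • z + ⁅h, z⁆ = 0 := congrArg Subtype.val hRz
    exact Subtype.ext (eq_zero_of_sl2_aux hef hhe (hV' e he) hz this)
  intro z hz v hv
  obtain ⟨⟨z', hz'⟩, hzz'⟩ := LinearMap.injective_iff_surjective.mp hinj ⟨z, hz⟩
  have hval : (2 : ℂ) • z' + ⁅h, z'⁆ = z := congrArg Subtype.val hzz'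
  rw [← hval]
  exact hfirst v hv z' hz'
end

/-! ### Reductive Lie algebras, and commuting semisimple and nilpotent elements -/

section
open LieModule (traceForm toEnd)
variable {g : Type*} [LieRing g] [LieAlgebra ℂ g]
  {M : Type*} [AddCommGroup M] [Module ℂ M] [LieRingModule g M] [LieModule ℂ g M]

lemma lie_mem_derived (a b : g) : ⁅a, b⁆ ∈ LieModule.lowerCentralSeries ℂ g g 1 := by
  rw [LieModule.lowerCentralSeries_succ, LieModule.lowerCentralSeries_zero]
  exact LieSubmodule.lie_mem_lie (LieSubmodule.mem_top a) (LieSubmodule.mem_top b)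

lemma derived_induction {p : g → Prop} (h0 : p 0) (hadd : ∀ x y, p x → p y → p (x + y))
    (hsmul : ∀ (c : ℂ) x, p x → p (c • x)) (hlie : ∀ a b : g, p ⁅a, b⁆) {x : g}
    (hx : x ∈ LieModule.lowerCentralSeries ℂ g g 1) : p x := by
  rw [LieModule.lowerCentralSeries_succ, LieModule.lowerCentralSeries_zero,
    ← LieSubmodule.mem_toSubmodule, LieSubmodule.lieIdeal_oper_eq_linear_span'] at hx
  induction hx using Submodule.span_induction with
  | mem x hx => obtain ⟨a, -, b, -, rfl⟩ := hx; exact hlie a b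
  | zero => exact h0
  | add x y _ _ h1 h2 => exact hadd x y h1 h2
  | smul c x _ h => exact hsmul c x h

lemma mem_center_of_orthogonal_derived
    (hB : ∀ y : g, (∀ z, traceForm ℂ g M y z = 0) → y = 0) {z : g}
    (hz : ∀ d ∈ LieModule.lowerCentralSeries ℂ g g 1, traceForm ℂ g M d z = 0) :
    z ∈ LieAlgebra.center ℂ g := by
  rw [LieModule.mem_maxTrivSubmodule]
  intro a
  refine hB _ fun b => ?_
  rw [LieModule.traceForm_comm, ← LieModule.traceForm_apply_lie_apply]
  exact hz _ (lie_mem_derived b a)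

lemma traceForm_center_derived {z d : g} (hz : z ∈ LieAlgebra.center ℂ g)
    (hd : d ∈ LieModule.lowerCentralSeries ℂ g g 1) : traceForm ℂ g M d z = 0 := by
  rw [LieModule.mem_maxTrivSubmodule] at hz
  refine derived_induction (p := fun d => traceForm ℂ g M d z = 0) ?_ ?_ ?_ ?_ hd
  · simp
  · intro x y hx hy; simp [hx, hy]
  · intro c x hx; simp [hx]
  · intro a b; rw [LieModule.traceForm_apply_lie_apply, hz b, map_zero]

lemma isNilpotent_of_forall_eigenvalue {V : Type*} [AddCommGroup V] [Module ℂ V] [Module.Finite ℂ V]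
    {f : End ℂ V} (h : ∀ a : ℂ, a ≠ 0 → f.maxGenEigenspace a = ⊥) : IsNilpotent f := by
  rw [Module.End.isNilpotent_iff_of_finite]
  intro m
  have hm : m ∈ f.maxGenEigenspace 0 := by
    have h1 : (⊤ : Submodule ℂ V) ≤ f.maxGenEigenspace 0 := by
      rw [← Module.End.iSup_maxGenEigenspace_eq_top f]
      refine iSup_le fun a => ?_
      by_cases ha : a = 0
      · rw [ha]
      · rw [h a ha]; exact bot_le
    exact h1 Submodule.mem_top
  rw [Module.End.mem_maxGenEigenspace] at hm
  simpa using hm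

/-- A central element of the derived algebra acts nilpotently on every module: it acts on each of
its generalized eigenspaces, which is a submodule, with trace zero. -/
lemma isNilpotent_of_mem_derived_of_mem_center [Module.Finite ℂ M] {x : g}
    (hd : x ∈ LieModule.lowerCentralSeries ℂ g g 1) (hc : x ∈ LieAlgebra.center ℂ g) :
    IsNilpotent (toEnd ℂ g M x) := by
  refine isNilpotent_of_forall_eigenvalue fun a ha => ?_
  have hcomm : ∀ y, Commute (toEnd ℂ g M x) (toEnd ℂ g M y) := fun y =>
    LieModule.commute_toEnd_of_mem_center_left M hc y
  let W : LieSubmodule ℂ g M :=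
    { (toEnd ℂ g M x).maxGenEigenspace a with
      lie_mem := fun {y m} hm =>
        Module.End.mapsTo_maxGenEigenspace_of_comm (hcomm y) a hm }
  have h1 : LinearMap.trace ℂ W (toEnd ℂ g W x) = 0 :=
    LieModule.trace_toEnd_eq_zero_of_mem_lcs ℂ g W le_rfl hd
  have h2 : IsNilpotent (toEnd ℂ g W x - algebraMap ℂ (End ℂ W) a) :=
    Module.End.isNilpotent_restrict_maxGenEigenspace_sub_algebraMap (toEnd ℂ g M x) a
  have h3 := (LinearMap.isNilpotent_trace_of_isNilpotent h2).eq_zero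
  rw [map_sub, h1, Algebra.algebraMap_eq_smul_one, map_smul, LinearMap.trace_one] at h3
  have h4 : finrank ℂ W = 0 := by simpa [ha] using h3
  exact Submodule.finrank_eq_zero.mp h4

/-- A Lie algebra with a nondegenerate trace form is spanned by its derived algebra and its centre,
in the form of a statement about the orthogonal complement of their sum. -/
lemma eq_zero_of_orthogonal_derived_center [Module.Finite ℂ g] [Module.Finite ℂ M]
    (hB : ∀ y : g, (∀ z, traceForm ℂ g M y z = 0) → y = 0) {x : g}
    (hx : ∀ d ∈ LieModule.lowerCentralSeries ℂ g g 1, traceForm ℂ g M d x = 0)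
    (hx' : ∀ z ∈ LieAlgebra.center ℂ g, traceForm ℂ g M z x = 0) : x = 0 := by
  have hrefl : (traceForm ℂ g M).IsRefl := (LieModule.traceForm_isSymm ℂ g M).isRefl
  have h1 : x ∈ LieModule.lowerCentralSeries ℂ g g 1 := by
    rw [← LieSubmodule.mem_toSubmodule,
      ← LinearMap.BilinForm.orthogonal_orthogonal (traceForm_nondegenerate_of hB) hrefl
      (LieModule.lowerCentralSeries ℂ g g 1).toSubmodule, LinearMap.BilinForm.mem_orthogonal_iff]
    intro z hz
    rw [LinearMap.BilinForm.mem_orthogonal_iff] at hz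
    exact hx' z (mem_center_of_orthogonal_derived hB hz)
  have h2 := mem_center_of_orthogonal_derived hB hx
  refine hB x fun z => ?_
  rw [LieModule.traceForm_apply_apply]
  exact (LinearMap.isNilpotent_trace_of_isNilpotent
    ((LieModule.commute_toEnd_of_mem_center_left M h2 z).isNilpotent_mul_right
      (isNilpotent_of_mem_derived_of_mem_center h1 h2))).eq_zero
end

section
variable {L : Type*} [LieRing L] [LieAlgebra ℂ L]

lemma commute_ad_of_lie {x y : L} (h : ⁅x, y⁆ = 0) : Commute (ad ℂ L x) (ad ℂ L y) := by
  rw [commute_iff_eq, ← sub_eq_zero]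
  ext m
  have h2 : ⁅⁅x, y⁆, m⁆ = 0 := by rw [h, zero_lie]
  rw [lie_lie] at h2
  simpa using h2

lemma killingForm_eq_zero_of_isNilpotent {x y : L} [Module.Finite ℂ L]
    (hx : IsNilpotent (ad ℂ L x)) (h : ⁅x, y⁆ = 0) :
    killingForm ℂ L x y = 0 := by
  rw [killingForm_apply_apply]
  exact (LinearMap.isNilpotent_trace_of_isNilpotent
    ((commute_ad_of_lie h).isNilpotent_mul_right hx)).eq_zero

lemma eq_zero_of_killingForm [IsKilling ℂ L] {x : L} (h : ∀ z, killingForm ℂ L x z = 0) :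
    x = 0 := by
  have h1 : x ∈ LinearMap.ker (killingForm ℂ L) := LinearMap.ext h
  rw [IsKilling.ker_killingForm_eq_bot] at h1
  simpa using h1

lemma eq_zero_of_ad_eq_zero [IsKilling ℂ L] {x : L} (h : ad ℂ L x = 0) : x = 0 :=
  eq_zero_of_killingForm fun z => by
    rw [killingForm_apply_apply, h, LinearMap.zero_comp, map_zero]

lemma lie_eq_zero_of_mem_adjoin {x y z : L} (hy : ad ℂ L y ∈ Algebra.adjoin ℂ {ad ℂ L x})
    (h : ⁅x, z⁆ = 0) [Module.Finite ℂ L] [IsKilling ℂ L] : ⁅y, z⁆ = 0 := by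
  have h1 : Commute (ad ℂ L z) (ad ℂ L y) :=
    Algebra.commute_of_mem_adjoin_singleton_of_commute hy (commute_ad_of_lie h).symm
  refine eq_zero_of_ad_eq_zero (LinearMap.ext fun m => ?_)
  have h2 := LinearMap.congr_fun h1.eq m
  simp only [Module.End.mul_apply, ad_apply] at h2
  rw [ad_apply, lie_lie, h2, sub_self, LinearMap.zero_apply]

lemma lie_eq_zero_of_lie_lie_pow {s y : L} (hs : (ad ℂ L s).IsSemisimple) {n : ℕ}
    (h : (ad ℂ L s ^ n) y = 0) : ⁅s, y⁆ = 0 := by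
  have h1 : y ∈ (ad ℂ L s).maxGenEigenspace 0 := by
    rw [Module.End.mem_maxGenEigenspace]; exact ⟨n, by simpa using h⟩
  rw [hs.isFinitelySemisimple.maxGenEigenspace_eq_eigenspace, Module.End.mem_eigenspace_iff] at h1
  simpa using h1

variable [Module.Finite ℂ L]

/-- For commuting `A` and `B` with `B` semisimple, a vector killed by `A + t B` is killed by both
as soon as `t` is none of the finitely many quotients `-a / b` of eigenvalues of `A` and `B`. -/
lemma exists_ker_add_smul_le (A B : End ℂ L) (hAB : Commute A B) (hB : B.IsSemisimple) :
    ∃ t : ℂ, LinearMap.ker (A + t • B) ≤ LinearMap.ker A ⊓ LinearMap.ker B := by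
  have hfin : (Set.image (fun p : ℂ × ℂ => - p.1 / p.2)
      ({a | A.HasEigenvalue a} ×ˢ {b | B.HasEigenvalue b})).Finite :=
    ((A.finite_hasEigenvalue).prod (B.finite_hasEigenvalue)).image _
  obtain ⟨t, ht⟩ := hfin.infinite_compl.nonempty
  refine ⟨t, ?_⟩
  have hcomm : Commute (A + t • B) B := hAB.add_left ((Commute.refl B).smul_left t)
  have hinv : LinearMap.ker (A + t • B) ∈ B.invtSubmodule := by
    rw [Module.End.mem_invtSubmodule]
    intro x hx
    have hx : (A + t • B) x = 0 := hx
    change (A + t • B) (B x) = 0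
    rw [← Module.End.mul_apply, hcomm.eq, Module.End.mul_apply, hx, map_zero]
  have hinv' : ∀ x ∈ LinearMap.ker (A + t • B), B x ∈ LinearMap.ker (A + t • B) :=
    fun x hx => hinv hx
  have hss : Module.End.IsSemisimple (LinearMap.restrict B hinv') := hB.restrict hinv
  have h0 : LinearMap.restrict B hinv' = 0 := by
    rw [hss.eq_zero_iff_forall_eigenvalue]
    intro b hb
    by_contra hb0
    obtain ⟨⟨x, hx⟩, hxe⟩ := hb.exists_hasEigenvector
    have hBx : B x = b • x := congrArg Subtype.val hxe.apply_eq_smul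
    have hx0 : x ≠ 0 := fun h => hxe.2 (Subtype.ext h)
    have hx : A x + t • B x = 0 := hx
    have hAx : A x = (-(t * b)) • x := by
      rw [eq_neg_of_add_eq_zero_left hx, hBx, neg_smul, smul_smul]
    refine ht ⟨(-(t * b), b), ⟨?_, ?_⟩, ?_⟩
    · exact Module.End.hasEigenvalue_of_hasEigenvector ⟨Module.End.mem_eigenspace_iff.mpr hAx, hx0⟩
    · exact Module.End.hasEigenvalue_of_hasEigenvector ⟨Module.End.mem_eigenspace_iff.mpr hBx, hx0⟩
    · simp [hb0]
  intro x hx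
  have hBx : B x = 0 := congrArg Subtype.val (LinearMap.congr_fun h0 ⟨x, hx⟩)
  have hx : A x + t • B x = 0 := hx
  exact ⟨by simpa [hBx] using hx, hBx⟩

variable [IsKilling ℂ L]

/-- Jordan components of an eigenvector of an automorphism are eigenvectors for the same
eigenvalue, by uniqueness of the decomposition. -/
lemma jordan_eigen (α : L ≃ₗ⁅ℂ⁆ L) {μ : ℂ} {x n s : L} (hx : α x = μ • x) (hxns : x = n + s)
    (hn : IsNilpotent (ad ℂ L n)) (hs : (ad ℂ L s).IsSemisimple) (hns : ⁅n, s⁆ = 0) :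
    α n = μ • n ∧ α s = μ • s := by
  have hinj : Function.Injective (ad ℂ L) := by
    intro a b hab
    exact sub_eq_zero.mp (eq_zero_of_ad_eq_zero (by rw [map_sub, hab, sub_self]))
  have e1 : IsNilpotent (ad ℂ L (α n)) := by
    rw [← LieAlgebra.conj_ad_apply]
    exact hn.map (α.toLinearEquiv.conjAlgEquiv ℂ)
  have e2 : (ad ℂ L (α s)).IsSemisimple := by
    refine (LinearEquiv.isSemisimple_iff (ad ℂ L s) (ad ℂ L (α s)) α.toLinearEquiv ?_).mp hs
    ext y; exact LieEquiv.map_lie α s y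
  have e3 : Commute (ad ℂ L (α n)) (ad ℂ L (α s)) :=
    commute_ad_of_lie (by rw [← LieEquiv.map_lie, hns, map_zero])
  have e4 : IsNilpotent (ad ℂ L (μ • n)) := by rw [map_smul]; exact hn.smul μ
  have e5 : (ad ℂ L (μ • s)).IsSemisimple := by
    rw [map_smul]; exact Module.End.IsSemisimple_smul μ hs
  have e6 : Commute (ad ℂ L (μ • n)) (ad ℂ L (μ • s)) :=
    commute_ad_of_lie (by rw [smul_lie, lie_smul, hns, smul_zero, smul_zero])
  have e7 : ad ℂ L (α n) + ad ℂ L (α s) = ad ℂ L (μ • n) + ad ℂ L (μ • s) := by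
    rw [← map_add, ← map_add, ← map_add, ← smul_add, ← hxns, hx]
  obtain ⟨h1, h2⟩ := Module.End.isNilpotent_isSemisimple_unique e1 e2 e4 e5 e3 e6 e7
  exact ⟨hinj h1, hinj h2⟩

end

/-! ### A generic element of an eigenspace of the automorphism -/

/-- The twisted average over the powers of `f` takes values in the `μ`-eigenspace. -/
lemma apply_twisted_sum {V : Type*} [AddCommGroup V] [Module ℂ V] {f : End ℂ V} {k : ℕ}
    (hf : f ^ k = 1) {μ : ℂ} (hμ : μ ^ k = 1) (hμ0 : μ ≠ 0) (a : V) :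
    f (∑ i ∈ Finset.range k, (μ⁻¹) ^ i • (f ^ i) a) =
      μ • ∑ i ∈ Finset.range k, (μ⁻¹) ^ i • (f ^ i) a := by
  have h1 : ∑ i ∈ Finset.range k, (μ⁻¹) ^ (i + 1) • (f ^ (i + 1)) a =
      ∑ i ∈ Finset.range k, (μ⁻¹) ^ i • (f ^ i) a := by
    have h2 := Finset.sum_range_succ (fun i => (μ⁻¹) ^ i • (f ^ i) a) k
    rw [Finset.sum_range_succ'] at h2
    simpa [hf, inv_pow, hμ] using h2
  conv_rhs => rw [← h1]
  rw [map_sum, Finset.smul_sum]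
  refine Finset.sum_congr rfl fun i _ => ?_
  rw [map_smul, smul_smul, pow_succ' f, Module.End.mul_apply, pow_succ', ← mul_assoc,
    mul_inv_cancel₀ hμ0, one_mul]

section
variable {L : Type*} [LieRing L] [LieAlgebra ℂ L]

/-- The centralizer `{z | ⁅s, z⁆ = 0}` of an element `s`, as a Lie subalgebra. -/
def centralizerOf (s : L) : LieSubalgebra ℂ L :=
  { LinearMap.ker (ad ℂ L s) with
    lie_mem' := by
      intro a b ha hb
      have ha : ⁅s, a⁆ = 0 := ha
      have hb : ⁅s, b⁆ = 0 := hb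
      change ⁅s, ⁅a, b⁆⁆ = 0
      rw [leibniz_lie, ha, hb, zero_lie, lie_zero, add_zero] }

lemma mem_centralizerOf {s z : L} : z ∈ centralizerOf s ↔ ⁅s, z⁆ = 0 := Iff.rfl

/-- The elements commuting with every element of the centralizer of `s`; this is the centre of that
centralizer. -/
def doubleCentralizer (s : L) : Submodule ℂ L where
  carrier := {c | ∀ z : L, ⁅s, z⁆ = 0 → ⁅z, c⁆ = 0}
  add_mem' ha hb z hz := by rw [lie_add, ha z hz, hb z hz, add_zero]
  zero_mem' z _ := lie_zero z
  smul_mem' t c hc z hz := by rw [lie_smul, hc z hz, smul_zero]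

lemma mem_doubleCentralizer {s c : L} : c ∈ doubleCentralizer s ↔ ∀ z : L, ⁅s, z⁆ = 0 → ⁅z, c⁆ = 0 :=
  Iff.rfl

lemma lie_eq_zero_of_mem_doubleCentralizer {s c : L} (hc : c ∈ doubleCentralizer s) : ⁅s, c⁆ = 0 :=
  hc s (lie_self s)

variable [Module.Finite ℂ L] [IsKilling ℂ L]

/-- The Killing form is nondegenerate on the centralizer of a semisimple element. -/
lemma eq_zero_of_orthogonal_centralizer {s x : L} (hs : (ad ℂ L s).IsSemisimple) (hx : ⁅s, x⁆ = 0)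
    (h : ∀ b, ⁅s, b⁆ = 0 → killingForm ℂ L x b = 0) : x = 0 := by
  refine eq_zero_of_killingForm fun z => ?_
  have hz : z ∈ ⨆ a : ℂ, (ad ℂ L s).eigenspace a := by
    rw [hs.iSup_eigenspace_eq_top]; exact Submodule.mem_top
  induction hz using Submodule.iSup_induction' with
  | mem a z hz =>
    rw [Module.End.mem_eigenspace_iff, ad_apply] at hz
    by_cases ha : a = 0
    · exact h z (by rw [hz, ha, zero_smul])
    · have h1 : killingForm ℂ L x (a • z) = 0 := by
        rw [← hz, ← LieModule.traceForm_apply_lie_apply, ← lie_skew, hx]; simp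
      simpa [ha] using h1
  | zero => simp
  | add x y _ _ hx hy => rw [map_add, hx, hy, add_zero]

/-- `(x, y) ↦ κ(x, y)` restricted to the centralizer of a semisimple element is nondegenerate. -/
lemma traceForm_centralizerOf {s : L} (hs : (ad ℂ L s).IsSemisimple) (y : centralizerOf s)
    (hy : ∀ z, LieModule.traceForm ℂ (centralizerOf s) L y z = 0) : y = 0 :=
  Subtype.ext (eq_zero_of_orthogonal_centralizer hs y.2 fun b hb => hy ⟨b, hb⟩)

lemma eq_zero_of_isNilpotent_of_mem_doubleCentralizer {s x : L} (hs : (ad ℂ L s).IsSemisimple)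
    (hx : IsNilpotent (ad ℂ L x)) (hc : x ∈ doubleCentralizer s) : x = 0 :=
  eq_zero_of_orthogonal_centralizer hs (lie_eq_zero_of_mem_doubleCentralizer hc) fun b hb =>
    killingForm_eq_zero_of_isNilpotent hx (by rw [← lie_skew, hc b hb, neg_zero])

/-- There are a semisimple `s` and an element `x` of the `μ`-eigenspace of `α` such that the
elements of the `μ⁻¹`-eigenspace commuting with `x` are central in the centralizer of `s`. -/
theorem exists_generic (α : L ≃ₗ⁅ℂ⁆ L) {k : ℕ} (hk : 1 ≤ k)
    (hα : (α.toLinearEquiv.toLinearMap : End ℂ L) ^ k = 1) {μ : ℂ} (hμ : μ ^ k = 1) :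
    ∃ s x : L, (ad ℂ L s).IsSemisimple ∧ α x = μ • x ∧
      ∀ y, α y = μ⁻¹ • y → ⁅x, y⁆ = 0 → y ∈ doubleCentralizer s := by
  have hμ0 : μ ≠ 0 := by rintro rfl; rw [zero_pow (by omega)] at hμ; exact zero_ne_one hμ
  obtain ⟨s, ⟨hsμ, hss⟩, hmin⟩ :=
    (measure fun x : L => finrank ℂ (LinearMap.ker (ad ℂ L x))).wf.has_min
    {s : L | α s = μ • s ∧ (ad ℂ L s).IsSemisimple}
    ⟨0, by simp, by rw [map_zero]; exact Module.End.isSemisimple_zero⟩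
  have hsmin : ∀ x, α x = μ • x → (ad ℂ L x).IsSemisimple →
      finrank ℂ (LinearMap.ker (ad ℂ L s)) ≤ finrank ℂ (LinearMap.ker (ad ℂ L x)) := by
    intro x hx hx'
    have h4 := hmin x ⟨hx, hx'⟩
    simp only [WellFoundedRelation.rel, InvImage, not_lt] at h4
    simpa using h4
  -- semisimple elements of the eigenspace commuting with `s` are central in the centralizer
  have hE : ∀ t, α t = μ • t → (ad ℂ L t).IsSemisimple → ⁅s, t⁆ = 0 → t ∈ doubleCentralizer s := by
    intro t htμ hts hst z hz
    obtain ⟨c, hc⟩ := exists_ker_add_smul_le (ad ℂ L s) (ad ℂ L t) (commute_ad_of_lie hst) hts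
    have h1 : ad ℂ L s + c • ad ℂ L t = ad ℂ L (s + c • t) := by rw [map_add, map_smul]
    have h2 : (ad ℂ L (s + c • t)).IsSemisimple := by
      rw [← h1]
      exact hss.add_of_commute ((commute_ad_of_lie hst).smul_right c)
        (Module.End.IsSemisimple_smul c hts)
    have h3 := hsmin (s + c • t) (by rw [map_add, map_smul, hsμ, htμ]; module) h2
    rw [h1] at hc
    have h4 : LinearMap.ker (ad ℂ L (s + c • t)) = LinearMap.ker (ad ℂ L s) :=
      Submodule.eq_of_le_of_finrank_le (hc.trans inf_le_left) h3
    have h5 : z ∈ LinearMap.ker (ad ℂ L (s + c • t)) := by rw [h4]; exact hz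
    have h6 : ⁅t, z⁆ = 0 := (hc h5).2
    rw [← lie_skew, h6, neg_zero]
  let l := centralizerOf s
  have hαl : ∀ z ∈ l.toSubmodule, (α.toLinearEquiv.toLinearMap : End ℂ L) z ∈ l.toSubmodule := by
    intro z hz
    have hz : ⁅s, z⁆ = 0 := hz
    change ⁅s, α z⁆ = 0
    have h1 : μ • ⁅s, α z⁆ = 0 := by
      rw [← smul_lie, ← hsμ, ← LieEquiv.map_lie, hz, map_zero]
    exact (smul_eq_zero.mp h1).resolve_left hμ0
  let β : End ℂ l := LinearMap.restrict _ hαl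
  have hβ : ∀ z : l, ((β z : l) : L) = α z := fun z => rfl
  have hβk : β ^ k = 1 := by
    ext z
    have h1 : ∀ n : ℕ, (((β ^ n) z : l) : L) =
        ((α.toLinearEquiv.toLinearMap : End ℂ L) ^ n) z := by
      intro n
      induction n with
      | zero => rfl
      | succ n ih =>
        rw [pow_succ', pow_succ', Module.End.mul_apply, Module.End.mul_apply, ← ih]; rfl
    rw [h1, hα]; rfl
  have hβlie : ∀ a b : l, β ⁅a, b⁆ = ⁅β a, β b⁆ := fun a b =>
    Subtype.ext (LieEquiv.map_lie α (a : L) (b : L))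
  let D := LieModule.lowerCentralSeries ℂ l l 1
  have hβD : ∀ d ∈ D, β d ∈ D := fun d hd => by
    refine derived_induction (p := fun d => β d ∈ D) ?_ ?_ ?_ ?_ hd
    · rw [map_zero]; exact D.zero_mem
    · intro x y hx hy; rw [map_add]; exact D.add_mem hx hy
    · intro c x hx; rw [map_smul]; exact D.smul_mem c hx
    · intro a b; rw [hβlie]; exact lie_mem_derived _ _
  have hcl : ∀ z : l, z ∈ LieAlgebra.center ℂ l ↔ (z : L) ∈ doubleCentralizer s := by
    intro z
    rw [LieModule.mem_maxTrivSubmodule]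
    exact ⟨fun h w hw => congrArg Subtype.val (h ⟨w, hw⟩), fun h w => Subtype.ext (h w w.2)⟩
  have hB := traceForm_centralizerOf hss
  let V : Submodule ℂ l := D.toSubmodule ⊓ β.eigenspace μ
  have hVnil : ∀ v ∈ V, IsNilpotent (ad ℂ L (v : L)) := by
    rintro v ⟨hvD, hvμ⟩
    have hvμ : α (v : L) = μ • (v : L) :=
      congrArg Subtype.val (Module.End.mem_eigenspace_iff.mp hvμ)
    obtain ⟨n, t, hnt, hn, ht, hn', ht'⟩ := jordan (v : L)
    have hvs : ⁅(v : L), s⁆ = 0 := by rw [← lie_skew, show ⁅s, (v : L)⁆ = 0 from v.2, neg_zero]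
    have hns := lie_eq_zero_of_mem_adjoin hn' hvs
    have hts := lie_eq_zero_of_mem_adjoin ht' hvs
    have hvt : ⁅t, (v : L)⁆ = 0 := lie_eq_zero_of_mem_adjoin ht' (lie_self _)
    have hnt0 : ⁅n, t⁆ = 0 :=
      lie_eq_zero_of_mem_adjoin hn' (by rw [← lie_skew, hvt, neg_zero])
    obtain ⟨hnμ, htμ⟩ := jordan_eigen α hvμ hnt hn ht hnt0
    have hst : ⁅s, t⁆ = 0 := by rw [← lie_skew, hts, neg_zero]
    have htc : t ∈ doubleCentralizer s := hE t htμ ht hst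
    have ht0 : (⟨t, hst⟩ : l) = 0 := by
      have htc' : (⟨t, hst⟩ : l) ∈ LieAlgebra.center ℂ l := (hcl _).mpr htc
      refine eq_zero_of_orthogonal_derived_center (M := L) hB
        (fun d hd => traceForm_center_derived htc' hd) fun z hz => ?_
      have hzc := (hcl z).mp hz
      have hsn : ⁅s, n⁆ = 0 := by rw [← lie_skew, hns, neg_zero]
      have h1 : killingForm ℂ L n z = 0 := killingForm_eq_zero_of_isNilpotent hn (hzc n hsn)
      have h2 : killingForm ℂ L v z = 0 := traceForm_center_derived (g := l) (M := L) hz hvD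
      have h3 : killingForm ℂ L t z = 0 := by
        rw [hnt, map_add, LinearMap.add_apply, h1, zero_add] at h2; exact h2
      rw [LieModule.traceForm_comm]; exact h3
    have ht0 : t = 0 := congrArg Subtype.val ht0
    rw [hnt, ht0, add_zero]; exact hn
  obtain ⟨e, heV, he⟩ := exists_generic_nilpotent (M := L) hB V (fun v hv => hVnil v hv) (by
    intro v hv
    obtain ⟨N, hN⟩ := hVnil v hv
    refine ⟨N, LinearMap.ext fun z => Subtype.ext ?_⟩
    have h1 : ∀ n : ℕ, (((ad ℂ l v ^ n) z : l) : L) = (ad ℂ L (v : L) ^ n) z := by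
      intro n
      induction n with
      | zero => rfl
      | succ n ih =>
        rw [pow_succ', pow_succ', Module.End.mul_apply, Module.End.mul_apply, ← ih]; rfl
    rw [h1, hN]; rfl)
  have heμ : α (e : L) = μ • (e : L) :=
    congrArg Subtype.val (Module.End.mem_eigenspace_iff.mp heV.2)
  refine ⟨s, s + e, hss, by rw [map_add, hsμ, heμ, smul_add], fun y hyμ hy => ?_⟩
  have hse : ⁅s, (e : L)⁆ = 0 := e.2
  have hsy : ⁅s, y⁆ = 0 := by
    obtain ⟨N, hN⟩ := hVnil e heV
    have hcomm : Commute (ad ℂ L s) (ad ℂ L (e : L)) := commute_ad_of_lie hse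
    have hpow : ∀ n : ℕ, (ad ℂ L s ^ n) y = (-1 : ℂ) ^ n • (ad ℂ L (e : L) ^ n) y := by
      intro n
      induction n with
      | zero => simp
      | succ n ih =>
        have h1 : ad ℂ L s y = - ad ℂ L (e : L) y := by
          rw [add_lie] at hy; exact eq_neg_of_add_eq_zero_left hy
        rw [pow_succ' (ad ℂ L s), Module.End.mul_apply, ih, map_smul, ← Module.End.mul_apply,
          (hcomm.pow_right n).eq, Module.End.mul_apply, h1, map_neg, pow_succ (ad ℂ L (e : L)),
          Module.End.mul_apply, pow_succ]
        module
    exact lie_eq_zero_of_lie_lie_pow hss (n := N) (by rw [hpow, hN]; simp)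
  have hey : ⁅(e : L), y⁆ = 0 := by rw [add_lie, hsy, zero_add] at hy; exact hy
  have hyV := he ⟨y, hsy⟩ (Subtype.ext hey)
  refine (hcl ⟨y, hsy⟩).mp (mem_center_of_orthogonal_derived (M := L) hB fun d hd => ?_)
  -- averaging `d` over the powers of `α` projects it to `V` without changing the pairing with `y`
  let P : l := ∑ i ∈ Finset.range k, (μ⁻¹) ^ i • (β ^ i) d
  have hPV : P ∈ V := by
    refine ⟨D.toSubmodule.sum_mem fun i _ => D.toSubmodule.smul_mem _ ?_,
      Module.End.mem_eigenspace_iff.mpr (apply_twisted_sum hβk hμ hμ0 d)⟩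
    clear * - hd hβD
    induction i with
    | zero => exact hd
    | succ i ih => rw [pow_succ', Module.End.mul_apply]; exact hβD _ ih
  have hsy' : y ∈ centralizerOf s := hsy
  have h1 : ∀ i : ℕ, (μ⁻¹) ^ i * LieModule.traceForm ℂ (centralizerOf s) L ((β ^ i) d) ⟨y, hsy'⟩ =
      LieModule.traceForm ℂ (centralizerOf s) L d ⟨y, hsy'⟩ := by
    change ∀ i : ℕ, (μ⁻¹) ^ i * killingForm ℂ L ((β ^ i) d : l) y = killingForm ℂ L d y
    intro i
    induction i with
    | zero => simp
    | succ i ih =>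
      have h2 := killingForm_of_equiv_apply α (((β ^ i) d : l) : L) y
      rw [hyμ, map_smul, smul_eq_mul] at h2
      rw [pow_succ' β, Module.End.mul_apply, hβ, pow_succ, mul_assoc, h2, ih]
  have h3 : LieModule.traceForm ℂ (centralizerOf s) L P ⟨y, hsy'⟩ = 0 := hyV P hPV
  simp only [P, map_sum, LinearMap.sum_apply, map_smul, LinearMap.smul_apply, smul_eq_mul] at h3
  rw [Finset.sum_congr rfl fun i _ => h1 i, Finset.sum_const, Finset.card_range,
    nsmul_eq_mul] at h3
  have hk0 : (k : ℂ) ≠ 0 := by exact_mod_cast (by omega : k ≠ 0)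
  exact (mul_eq_zero.mp h3).resolve_left hk0
end

/-! ### The dimension of the centre of the centralizer of a semisimple element -/

section
variable {Γ : Type*} [AddCommGroup Γ] [LinearOrder Γ] [IsOrderedAddMonoid Γ] (φ : ℂ →+ Γ)

/-- The sum of the eigenspaces of `f` for the eigenvalues `a` with `γ < φ a`, where `φ` is a
homomorphism from `ℂ` to an ordered abelian group. -/
def upperSum {V : Type*} [AddCommGroup V] [Module ℂ V] (f : End ℂ V) (γ : Γ) : Submodule ℂ V :=
  ⨆ a : {a : ℂ // γ < φ a}, f.eigenspace a

variable {φ}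

lemma mem_upperSum_of_eigenspace {V : Type*} [AddCommGroup V] [Module ℂ V] {f : End ℂ V} {γ : Γ}
    {a : ℂ} (ha : γ < φ a) {x : V} (hx : f x = a • x) : x ∈ upperSum φ f γ :=
  Submodule.mem_iSup_of_mem (⟨a, ha⟩ : {a : ℂ // γ < φ a}) (Module.End.mem_eigenspace_iff.mpr hx)

lemma upperSum_induction {V : Type*} [AddCommGroup V] [Module ℂ V] {f : End ℂ V} {γ : Γ}
    {p : V → Prop} (h0 : p 0) (hadd : ∀ x y, p x → p y → p (x + y))
    (hmem : ∀ a x, γ < φ a → f x = a • x → p x) {x : V} (hx : x ∈ upperSum φ f γ) : p x := by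
  induction hx using Submodule.iSup_induction' with
  | mem a x hx => exact hmem a x a.2 (Module.End.mem_eigenspace_iff.mp hx)
  | zero => exact h0
  | add x y _ _ hx hy => exact hadd x y hx hy

lemma eq_zero_of_mem_upperSum {V : Type*} [AddCommGroup V] [Module ℂ V] {f : End ℂ V} {a : ℂ}
    {x : V} (hx : x ∈ upperSum φ f (φ a)) (hx' : f x = a • x) : x = 0 := by
  have h1 := f.eigenspaces_iSupIndep a
  rw [Submodule.disjoint_def] at h1
  refine h1 x (Module.End.mem_eigenspace_iff.mpr hx') ?_
  refine (iSup_le fun b => ?_ : upperSum φ f (φ a) ≤ _) hx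
  exact le_iSup₂_of_le b.1 (fun h => (b.2.ne' (congrArg φ h))) le_rfl

variable {L : Type*} [LieRing L] [LieAlgebra ℂ L]

lemma lie_eigen {s x y : L} {a b : ℂ} (hx : ⁅s, x⁆ = a • x) (hy : ⁅s, y⁆ = b • y) :
    ⁅s, ⁅x, y⁆⁆ = (a + b) • ⁅x, y⁆ := by
  rw [leibniz_lie, hx, hy, smul_lie, lie_smul, add_smul]

lemma lie_mem_upperSum_of_eigen {s x w : L} {γ : Γ} {b : ℂ} (hx : x ∈ upperSum φ (ad ℂ L s) γ)
    (hw : ⁅s, w⁆ = b • w) : ⁅x, w⁆ ∈ upperSum φ (ad ℂ L s) (γ + φ b) := by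
  refine upperSum_induction (p := fun x => ⁅x, w⁆ ∈ upperSum φ (ad ℂ L s) (γ + φ b)) ?_ ?_ ?_ hx
  · rw [zero_lie]; exact zero_mem _
  · intro x y hx hy; rw [add_lie]; exact add_mem hx hy
  · intro a x ha hx
    exact mem_upperSum_of_eigenspace (a := a + b) (by rw [map_add]; gcongr) (lie_eigen hx hw)

lemma lie_mem_upperSum {s x w : L} {γ : Γ} (hx : x ∈ upperSum φ (ad ℂ L s) 0)
    (hw : w ∈ upperSum φ (ad ℂ L s) γ) : ⁅x, w⁆ ∈ upperSum φ (ad ℂ L s) γ := by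
  refine upperSum_induction (p := fun w => ⁅x, w⁆ ∈ upperSum φ (ad ℂ L s) γ) ?_ ?_ ?_ hw
  · rw [lie_zero]; exact zero_mem _
  · intro x y hx hy; rw [lie_add]; exact add_mem hx hy
  · intro b w hb hw
    refine upperSum_induction (p := fun x => ⁅x, w⁆ ∈ upperSum φ (ad ℂ L s) γ) ?_ ?_ ?_ hx
    · rw [zero_lie]; exact zero_mem _
    · intro x y hx hy; rw [add_lie]; exact add_mem hx hy
    · intro a x ha hx
      exact mem_upperSum_of_eigenspace (a := a + b)
        (by rw [map_add]; exact lt_of_lt_of_le hb (le_add_of_nonneg_left ha.le)) (lie_eigen hx hw)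

lemma lie_mem_upperSum_of_centralizer {s u w : L} {γ : Γ} (hu : ⁅s, u⁆ = 0)
    (hw : w ∈ upperSum φ (ad ℂ L s) γ) : ⁅u, w⁆ ∈ upperSum φ (ad ℂ L s) γ := by
  refine upperSum_induction (p := fun w => ⁅u, w⁆ ∈ upperSum φ (ad ℂ L s) γ) ?_ ?_ ?_ hw
  · rw [lie_zero]; exact zero_mem _
  · intro x y hx hy; rw [lie_add]; exact add_mem hx hy
  · intro b w hb hw
    refine mem_upperSum_of_eigenspace hb ?_
    have := lie_eigen (a := 0) (by rw [hu, zero_smul]) hw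
    rwa [zero_add] at this

variable [Module.Finite ℂ L]

lemma isNilpotent_of_eigenvectors {s : L} (hs : (ad ℂ L s).IsSemisimple) {f : End ℂ L}
    (h : ∀ (a : ℂ) (w : L), ⁅s, w⁆ = a • w → ∃ n : ℕ, (f ^ n) w = 0) : IsNilpotent f := by
  rw [Module.End.isNilpotent_iff_of_finite]
  intro m
  have h1 : (⊤ : Submodule ℂ L) ≤ f.maxGenEigenspace 0 := by
    rw [← hs.iSup_eigenspace_eq_top]
    refine iSup_le fun a w hw => ?_
    rw [Module.End.mem_maxGenEigenspace]
    simpa using h a w (Module.End.mem_eigenspace_iff.mp hw)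
  have h2 := h1 (Submodule.mem_top (x := m))
  rw [Module.End.mem_maxGenEigenspace] at h2
  simpa using h2

/-- The sum of the positive eigenspaces of `ad s` consists of nilpotent elements, since they raise
the finitely many eigenvalues of `ad s`. -/
lemma isNilpotent_of_mem_upperSum {s x : L} (hs : (ad ℂ L s).IsSemisimple)
    (hx : x ∈ upperSum φ (ad ℂ L s) 0) : IsNilpotent (ad ℂ L x) := by
  classical
  let F : Finset ℂ := (ad ℂ L s).finite_hasEigenvalue.toFinset
  have key : ∀ (m : ℕ) (b : ℂ), (F.filter fun a => φ b < φ a).card ≤ m → ∀ w : L, ⁅s, w⁆ = b • w →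
      w ∈ (ad ℂ L x).maxGenEigenspace 0 := by
    intro m
    induction m using Nat.strong_induction_on with
    | _ m ih =>
    intro b hb w hw
    have h1 : ⁅x, w⁆ ∈ upperSum φ (ad ℂ L s) (φ b) := by
      have := lie_mem_upperSum_of_eigen hx hw
      rwa [zero_add] at this
    have h2 : ⁅x, w⁆ ∈ (ad ℂ L x).maxGenEigenspace 0 := by
      refine upperSum_induction (p := fun w => w ∈ (ad ℂ L x).maxGenEigenspace 0) (zero_mem _)
        (fun _ _ => add_mem) (fun a v ha hv => ?_) h1
      by_cases hv0 : v = 0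
      · rw [hv0]; exact zero_mem _
      have hsub : (F.filter fun c => φ a < φ c).card < (F.filter fun c => φ b < φ c).card := by
        refine Finset.card_lt_card (Finset.ssubset_iff_of_subset ?_ |>.mpr ⟨a, ?_, ?_⟩)
        · intro c hc
          rw [Finset.mem_filter] at hc ⊢
          exact ⟨hc.1, ha.trans hc.2⟩
        · rw [Finset.mem_filter]
          refine ⟨?_, ha⟩
          rw [Set.Finite.mem_toFinset]
          exact Module.End.hasEigenvalue_of_hasEigenvector
            ⟨Module.End.mem_eigenspace_iff.mpr hv, hv0⟩
        · simp
      exact ih _ (hsub.trans_le hb) a le_rfl v hv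
    rw [Module.End.mem_maxGenEigenspace] at h2 ⊢
    obtain ⟨n, hn⟩ := h2
    refine ⟨n + 1, ?_⟩
    rw [pow_succ, Module.End.mul_apply]
    simpa using hn
  refine isNilpotent_of_eigenvectors hs fun a w hw => ?_
  have := key _ a le_rfl w hw
  rw [Module.End.mem_maxGenEigenspace] at this
  simpa using this

/-- In the parabolic subalgebra attached to `s`, the Levi component `u` of a nilpotent element `p +
u` is nilpotent: it gives the associated graded operator of `ad (p + u)` for the filtration by
eigenvalues of `ad s`. -/
lemma isNilpotent_of_add {s u p : L} (hs : (ad ℂ L s).IsSemisimple) (hu : ⁅s, u⁆ = 0)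
    (hp : p ∈ upperSum φ (ad ℂ L s) 0) (h : IsNilpotent (ad ℂ L (p + u))) :
    IsNilpotent (ad ℂ L u) := by
  obtain ⟨N, hN⟩ := h
  refine isNilpotent_of_eigenvectors hs fun a w hw => ⟨N, ?_⟩
  have hmem : ∀ n : ℕ, ⁅s, (ad ℂ L u ^ n) w⁆ = a • (ad ℂ L u ^ n) w := by
    intro n
    induction n with
    | zero => exact hw
    | succ n ih =>
      rw [pow_succ', Module.End.mul_apply, ad_apply]
      have := lie_eigen (a := 0) (by rw [hu, zero_smul]) ih
      rwa [zero_add] at this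
  have hdiff : ∀ n : ℕ, (ad ℂ L u ^ n) w - (ad ℂ L (p + u) ^ n) w ∈
      upperSum φ (ad ℂ L s) (φ a) := by
    intro n
    induction n with
    | zero => simp
    | succ n ih =>
      rw [pow_succ', pow_succ', Module.End.mul_apply, Module.End.mul_apply, ad_apply, ad_apply]
      set v := (ad ℂ L u ^ n) w
      set v' := (ad ℂ L (p + u) ^ n) w
      have e : ⁅u, v⁆ - ⁅p + u, v'⁆ = ⁅p, v - v'⁆ + ⁅u, v - v'⁆ - ⁅p, v⁆ := by
        simp only [add_lie, lie_sub]; abel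
      rw [e]
      refine sub_mem (add_mem (lie_mem_upperSum hp ih) (lie_mem_upperSum_of_centralizer hu ih)) ?_
      have := lie_mem_upperSum_of_eigen hp (hmem n)
      rwa [zero_add] at this
  have h1 := hdiff N
  rw [hN, LinearMap.zero_apply, sub_zero] at h1
  exact eq_zero_of_mem_upperSum h1 (hmem N)

lemma killingForm_eigen {s x y : L} {a b : ℂ} (hx : ⁅s, x⁆ = a • x) (hy : ⁅s, y⁆ = b • y)
    (hab : a + b ≠ 0) : killingForm ℂ L x y = 0 := by
  have h1 : killingForm ℂ L ⁅s, x⁆ y = - killingForm ℂ L x ⁅s, y⁆ :=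
    LieModule.traceForm_apply_lie_apply' ℂ L L s x y
  rw [hx, hy] at h1
  simp only [map_smul, LinearMap.smul_apply, smul_eq_mul] at h1
  have h2 : (a + b) * killingForm ℂ L x y = 0 := by linear_combination h1
  exact (mul_eq_zero.mp h2).resolve_left hab

lemma killingForm_upperSum_upperSum {s x y : L} (hx : x ∈ upperSum φ (ad ℂ L s) 0)
    (hy : y ∈ upperSum φ (ad ℂ L s) 0) : killingForm ℂ L x y = 0 := by
  refine upperSum_induction (p := fun x => killingForm ℂ L x y = 0) ?_ ?_ ?_ hx
  · simp
  · intro x y hx hy; simp [hx, hy]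
  intro a x ha hx
  refine upperSum_induction (p := fun y => killingForm ℂ L x y = 0) ?_ ?_ ?_ hy
  · simp
  · intro x y hx hy; simp [hx, hy]
  intro b y hb hy
  refine killingForm_eigen hx hy fun h => ?_
  have h1 : φ a + φ b = 0 := by rw [← map_add, h, map_zero]
  exact (add_pos ha hb).ne' h1

lemma killingForm_upperSum_centralizer {s x y : L} (hx : x ∈ upperSum φ (ad ℂ L s) 0)
    (hy : ⁅s, y⁆ = 0) : killingForm ℂ L x y = 0 := by
  refine upperSum_induction (p := fun x => killingForm ℂ L x y = 0) ?_ ?_ ?_ hx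
  · simp
  · intro x y hx hy; simp [hx, hy]
  intro a x ha hx
  refine killingForm_eigen hx (b := 0) (by rw [hy, zero_smul]) fun h => ?_
  rw [add_zero] at h
  rw [h, map_zero] at ha
  exact ha.false

lemma upperSum_sup_eq_top (hφ : Function.Injective φ) {s : L} (hs : (ad ℂ L s).IsSemisimple) :
    upperSum φ (ad ℂ L s) 0 ⊔ upperSum φ (ad ℂ L (-s)) 0 ⊔ LinearMap.ker (ad ℂ L s) = ⊤ := by
  rw [eq_top_iff, ← hs.iSup_eigenspace_eq_top]
  refine iSup_le fun a x hx => ?_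
  rw [Module.End.mem_eigenspace_iff, ad_apply] at hx
  rcases lt_trichotomy (φ a) 0 with h | h | h
  · refine Submodule.mem_sup_left (Submodule.mem_sup_right ?_)
    refine mem_upperSum_of_eigenspace (a := -a) (by rw [map_neg]; exact neg_pos.mpr h) ?_
    rw [ad_apply, neg_lie, hx, neg_smul]
  · have : a = 0 := hφ (by rw [h, map_zero])
    refine Submodule.mem_sup_right ?_
    rw [LinearMap.mem_ker, ad_apply, hx, this, zero_smul]
  · exact Submodule.mem_sup_left (Submodule.mem_sup_left (mem_upperSum_of_eigenspace h hx))

variable [IsKilling ℂ L]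

/-- The orthogonal complement of the sum of the positive eigenspaces of `ad s` is contained in the
sum of the nonnegative ones. -/
lemma exists_add_of_orthogonal_upperSum (hφ : Function.Injective φ) {s z : L}
    (hs : (ad ℂ L s).IsSemisimple)
    (hz : ∀ x ∈ upperSum φ (ad ℂ L s) 0, killingForm ℂ L x z = 0) :
    ∃ p ∈ upperSum φ (ad ℂ L s) 0, ∃ u, ⁅s, u⁆ = 0 ∧ z = p + u := by
  have h1 : ∀ z : L, ∃ p ∈ upperSum φ (ad ℂ L s) 0, ∃ q ∈ upperSum φ (ad ℂ L (-s)) 0,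
      ∃ u, ⁅s, u⁆ = 0 ∧ z = p + q + u := by
    intro z
    have hz' : z ∈ upperSum φ (ad ℂ L s) 0 ⊔ upperSum φ (ad ℂ L (-s)) 0 ⊔
      LinearMap.ker (ad ℂ L s) := by rw [upperSum_sup_eq_top hφ hs]; exact Submodule.mem_top
    obtain ⟨v, hv, u, hu, rfl⟩ := Submodule.mem_sup.mp hz'
    obtain ⟨p, hp, q, hq, rfl⟩ := Submodule.mem_sup.mp hv
    exact ⟨p, hp, q, hq, u, hu, rfl⟩
  have hneg : ∀ {u : L}, ⁅s, u⁆ = 0 → ⁅-s, u⁆ = 0 := fun h => by rw [neg_lie, h, neg_zero]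
  obtain ⟨p, hp, q, hq, u, hu, rfl⟩ := h1 z
  have hq0 : q = 0 := by
    refine eq_zero_of_killingForm fun w => ?_
    obtain ⟨p', hp', q', hq', u', hu', rfl⟩ := h1 w
    have e1 := hz p' hp'
    rw [map_add, map_add, killingForm_upperSum_upperSum hp' hp,
      killingForm_upperSum_centralizer hp' hu, zero_add, add_zero] at e1
    rw [map_add, map_add, killingForm_upperSum_upperSum hq hq',
      killingForm_upperSum_centralizer hq (hneg hu'), LieModule.traceForm_comm, e1, add_zero,
      add_zero]
  exact ⟨p, hp, u, hu, by rw [hq0, add_zero]⟩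

lemma killingForm_nondeg : (killingForm ℂ L).Nondegenerate :=
  traceForm_nondegenerate_of fun _ h => eq_zero_of_killingForm h

open LinearMap.BilinForm in
/-- For an isotropic subspace `N` of nilpotent elements, `2 dim N + dim C ≤ dim L`, where `C` is
the centre of the centralizer of the semisimple element `s`. With `P` the sum of the positive
eigenspaces of `ad s`, the subspace `X = (N ∩ P^⊥) + P` is isotropic with `dim N ≤ dim X`. The Levi
components of its elements are nilpotent, so `C` meets `X` trivially and is orthogonal to it; hence
`dim X + dim C ≤ dim X^⊥ = dim L - dim X`. -/
lemma finrank_le_of_isotropic (hφ : Function.Injective φ) {s : L} (hs : (ad ℂ L s).IsSemisimple)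
    (N : Submodule ℂ L) (hN : ∀ x ∈ N, IsNilpotent (ad ℂ L x))
    (hN' : ∀ x ∈ N, ∀ y ∈ N, killingForm ℂ L x y = 0) :
    2 * finrank ℂ N + finrank ℂ (doubleCentralizer s) ≤ finrank ℂ L := by
  have hrefl : (killingForm ℂ L).IsRefl := (LieModule.traceForm_isSymm ℂ L L).isRefl
  have hnd := killingForm_nondeg (L := L)
  have hsymm : ∀ x y, killingForm ℂ L x y = killingForm ℂ L y x := LieModule.traceForm_comm ℂ L L
  let P := upperSum φ (ad ℂ L s) 0
  let C := doubleCentralizer s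
  let N₁ := N ⊓ (killingForm ℂ L).orthogonal P
  let X := N₁ ⊔ P
  have hdec : ∀ x ∈ X, ∃ p ∈ P, ∃ u, ⁅s, u⁆ = 0 ∧ IsNilpotent (ad ℂ L u) ∧ x = p + u := by
    intro x hx
    obtain ⟨n, hn, p', hp', rfl⟩ := Submodule.mem_sup.mp hx
    obtain ⟨p, hp, u, hu, rfl⟩ := exists_add_of_orthogonal_upperSum hφ hs hn.2
    exact ⟨p + p', add_mem hp hp', u, hu, isNilpotent_of_add hs hu hp (hN _ hn.1), by abel⟩
  have hXC : Disjoint X C := by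
    rw [Submodule.disjoint_def]
    intro x hx hxC
    obtain ⟨p, hp, u, hu, hun, rfl⟩ := hdec x hx
    have hp0 : p = 0 := by
      refine eq_zero_of_mem_upperSum (f := ad ℂ L s) (a := 0) (φ := φ)
        (by rw [map_zero]; exact hp) ?_
      have := lie_eq_zero_of_mem_doubleCentralizer hxC
      rw [lie_add, hu, add_zero] at this
      rw [zero_smul]; exact this
    rw [hp0, zero_add] at hxC ⊢
    exact eq_zero_of_isNilpotent_of_mem_doubleCentralizer hs hun hxC
  have hle : X ⊔ C ≤ (killingForm ℂ L).orthogonal X := by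
    refine sup_le (fun x hx => ?_) fun c hc => ?_
    · rw [mem_orthogonal_iff]
      intro y hy
      obtain ⟨n, hn, p, hp, rfl⟩ := Submodule.mem_sup.mp hx
      obtain ⟨n', hn', p', hp', rfl⟩ := Submodule.mem_sup.mp hy
      have e1 : killingForm ℂ L p' n = 0 := hn.2 p' hp'
      have e2 : killingForm ℂ L p n' = 0 := hn'.2 p hp
      change killingForm ℂ L (n' + p') (n + p) = 0
      rw [map_add, map_add, LinearMap.add_apply, LinearMap.add_apply, hN' _ hn'.1 _ hn.1, e1,
        hsymm n' p, e2, killingForm_upperSum_upperSum hp' hp]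
      simp
    · rw [mem_orthogonal_iff]
      intro y hy
      obtain ⟨p, hp, u, hu, hun, rfl⟩ := hdec y hy
      change killingForm ℂ L (p + u) c = 0
      rw [map_add, LinearMap.add_apply,
        killingForm_upperSum_centralizer hp (lie_eq_zero_of_mem_doubleCentralizer hc),
        killingForm_eq_zero_of_isNilpotent hun (hc u hu), add_zero]
  have d1 := Submodule.finrank_mono hle
  have d2 := finrank_orthogonal hnd X
  have d3 := Submodule.finrank_sup_add_finrank_inf_eq X C
  rw [hXC.eq_bot, finrank_bot] at d3
  have d4 := Submodule.finrank_le X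
  have d5 := Submodule.finrank_sup_add_finrank_inf_eq N₁ P
  have d6 : finrank ℂ (N₁ ⊓ P : Submodule ℂ L) ≤ finrank ℂ (N ⊓ P : Submodule ℂ L) :=
    Submodule.finrank_mono (inf_le_inf_right P inf_le_left)
  have hNN : N ≤ (killingForm ℂ L).orthogonal N := fun x hx y hy => hN' y hy x hx
  have d7 : finrank ℂ (N ⊓ P : Submodule ℂ L) ≤
      finrank ℂ ((killingForm ℂ L).orthogonal N ⊓ P : Submodule ℂ L) :=
    Submodule.finrank_mono (inf_le_inf_right P hNN)
  have d8 := Submodule.finrank_sup_add_finrank_inf_eq ((killingForm ℂ L).orthogonal N) P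
  have d9 := finrank_orthogonal hnd N
  have d10 := finrank_orthogonal hnd ((killingForm ℂ L).orthogonal N ⊔ P)
  have d11 : (killingForm ℂ L).orthogonal ((killingForm ℂ L).orthogonal N ⊔ P) ≤ N₁ := by
    refine le_inf ?_ (orthogonal_le le_sup_right)
    refine (orthogonal_le le_sup_left).trans ?_
    rw [orthogonal_orthogonal hnd hrefl]
  have d12 := Submodule.finrank_mono d11
  have d13 := Submodule.finrank_le N
  have d14 := Submodule.finrank_le ((killingForm ℂ L).orthogonal N ⊔ P)
  change 2 * finrank ℂ N + finrank ℂ C ≤ finrank ℂ L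
  change finrank ℂ X + _ = _ at d5
  omega

end

section
variable {L : Type*} [LieRing L] [LieAlgebra ℂ L] [Module.Finite ℂ L] [IsKilling ℂ L]

/-- An element of the Cartan subalgebra on which no root vanishes is semisimple with centralizer
contained in the Cartan subalgebra. -/
lemma exists_regular (H : LieSubalgebra ℂ L) [H.IsCartanSubalgebra] :
    ∃ y : L, (ad ℂ L y).IsSemisimple ∧ LinearMap.ker (ad ℂ L y) ≤ H.toSubmodule := by
  obtain ⟨y, hy⟩ := Module.Dual.exists_forall_ne_zero_of_forall_exists
    (fun χ : {χ : LieModule.Weight ℂ H L // χ.IsNonZero} => LieModule.Weight.toLinear ℂ H L χ.1)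
    (by
      rintro ⟨χ, hχ⟩
      by_contra! hcon
      exact hχ (by ext z; exact hcon z))
  refine ⟨y, IsKilling.isSemisimple_ad_of_mem_isCartanSubalgebra y.2, fun x hx => ?_⟩
  have hx : ⁅(y : L), x⁆ = 0 := hx
  let W : Submodule ℂ L := ⨆ (a : ℂ) (_ : a ≠ 0), (ad ℂ L (y : L)).eigenspace a
  have htop : x ∈ H.toSubmodule ⊔ W := by
    have h1 : (⊤ : Submodule ℂ L) ≤ H.toSubmodule ⊔ W := by
      have h2 := LieModule.iSup_genWeightSpace_eq_top' ℂ H L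
      rw [← LieSubmodule.top_toSubmodule (R := ℂ) (L := H) (M := L), ← h2, LieSubmodule.iSup_toSubmodule]
      refine iSup_le fun χ => ?_
      by_cases hχ : χ.IsZero
      · refine le_sup_of_le_left ?_
        rw [hχ.eq]
        intro z hz
        have h3 := rootSpace_zero_eq ℂ L H
        have h4 : z ∈ rootSpace H (0 : H → ℂ) := hz
        rw [h3] at h4
        simpa using h4
      · refine le_sup_of_le_right ?_
        refine le_iSup₂_of_le (χ y) (hy ⟨χ, hχ⟩) fun z hz => ?_
        rw [Module.End.mem_eigenspace_iff]
        exact IsKilling.lie_eq_smul_of_mem_rootSpace hz y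
    exact h1 Submodule.mem_top
  obtain ⟨h, hh, w, hw, rfl⟩ := Submodule.mem_sup.mp htop
  have hyh : ⁅(y : L), h⁆ = 0 := congrArg Subtype.val (trivial_lie_zero H H y ⟨h, hh⟩)
  rw [lie_add, hyh, zero_add] at hx
  have hind := Submodule.disjoint_def.mp ((ad ℂ L (y : L)).eigenspaces_iSupIndep 0) w
    (Module.End.mem_eigenspace_iff.mpr (by rw [ad_apply, hx, zero_smul])) hw
  rw [hind, add_zero]
  exact hh

/-- The embedding of `ℂ` into `ℝ × ℝ` with the lexicographic order. -/
noncomputable def lexHom : ℂ →+ Lex (ℝ × ℝ) where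
  toFun z := toLex (z.re, z.im)
  map_zero' := rfl
  map_add' _ _ := rfl

lemma lexHom_injective : Function.Injective lexHom := fun z w h => by
  have h : (z.re, z.im) = (w.re, w.im) := h
  exact Complex.ext (congrArg Prod.fst h) (congrArg Prod.snd h)

/-- The centre of the centralizer of a semisimple element has dimension at most the rank. -/
theorem finrank_doubleCentralizer_le (H : LieSubalgebra ℂ L) [H.IsCartanSubalgebra] {s : L}
    (hs : (ad ℂ L s).IsSemisimple) : finrank ℂ (doubleCentralizer s) ≤ finrank ℂ H := by
  obtain ⟨y, hy, hker⟩ := exists_regular H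
  have hy' : (ad ℂ L (-y)).IsSemisimple := by rw [map_neg]; simpa using hy
  have h1 := finrank_le_of_isotropic lexHom_injective hs (upperSum lexHom (ad ℂ L y) 0)
    (fun x hx => isNilpotent_of_mem_upperSum hy hx)
    (fun a ha b hb => killingForm_upperSum_upperSum ha hb)
  have h2 := finrank_le_of_isotropic lexHom_injective hs (upperSum lexHom (ad ℂ L (-y)) 0)
    (fun x hx => isNilpotent_of_mem_upperSum hy' hx)
    (fun a ha b hb => killingForm_upperSum_upperSum ha hb)
  have h3 := upperSum_sup_eq_top lexHom_injective hy
  have h4 := Submodule.finrank_add_le_finrank_add_finrank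
    (upperSum lexHom (ad ℂ L y) 0 ⊔ upperSum lexHom (ad ℂ L (-y)) 0) (LinearMap.ker (ad ℂ L y))
  rw [h3, finrank_top] at h4
  have h5 := Submodule.finrank_add_le_finrank_add_finrank
    (upperSum lexHom (ad ℂ L y) 0) (upperSum lexHom (ad ℂ L (-y)) 0)
  have h6 : finrank ℂ (LinearMap.ker (ad ℂ L y)) ≤ finrank ℂ H := Submodule.finrank_mono hker
  omega
end

/-! ### The dimension of the fixed-point subalgebra -/

section
variable {L : Type*} [LieRing L] [LieAlgebra ℂ L] [Module.Finite ℂ L] [IsKilling ℂ L]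

/-- For a suitable `x` in the `μ`-eigenspace, `ad x` maps the `μ⁻¹`-eigenspace to the fixed points
with kernel of dimension at most the rank. -/
lemma finrank_eigenspace_inv_le (H : LieSubalgebra ℂ L) [H.IsCartanSubalgebra]
    (α : L ≃ₗ⁅ℂ⁆ L) {k : ℕ} (hk : 1 ≤ k)
    (hα : (α.toLinearEquiv.toLinearMap : End ℂ L) ^ k = 1) {μ : ℂ} (hμ : μ ^ k = 1) :
    finrank ℂ (End.eigenspace (α.toLinearEquiv.toLinearMap : End ℂ L) μ⁻¹) ≤
      finrank ℂ (End.eigenspace (α.toLinearEquiv.toLinearMap : End ℂ L) 1) + finrank ℂ H := by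
  have hμ0 : μ ≠ 0 := by rintro rfl; rw [zero_pow (by omega)] at hμ; exact zero_ne_one hμ
  obtain ⟨s, x, hs, hx, hxy⟩ := exists_generic α hk hα hμ
  let E := End.eigenspace (α.toLinearEquiv.toLinearMap : End ℂ L) μ⁻¹
  let T : E →ₗ[ℂ] L := (ad ℂ L x : L →ₗ[ℂ] L) ∘ₗ E.subtype
  have hE : ∀ y ∈ E, α y = μ⁻¹ • y := fun y hy => Module.End.mem_eigenspace_iff.mp hy
  have h1 := T.finrank_range_add_finrank_ker
  have h2 : LinearMap.range T ≤ End.eigenspace (α.toLinearEquiv.toLinearMap : End ℂ L) 1 := by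
    rintro _ ⟨y, rfl⟩
    rw [Module.End.mem_eigenspace_iff]
    change α ⁅x, (y : L)⁆ = (1 : ℂ) • ⁅x, (y : L)⁆
    rw [LieEquiv.map_lie, hx, hE y y.2, smul_lie, lie_smul, smul_smul, mul_inv_cancel₀ hμ0]
  have h3 : finrank ℂ (LinearMap.ker T) ≤ finrank ℂ (doubleCentralizer s) := by
    rw [← Submodule.finrank_map_subtype_eq E (LinearMap.ker T)]
    refine Submodule.finrank_mono ?_
    rintro _ ⟨y, hy, rfl⟩
    exact hxy y (hE y y.2) hy
  have h4 := finrank_doubleCentralizer_le H hs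
  have h5 := Submodule.finrank_mono h2
  change finrank ℂ E ≤ _
  omega

lemma finrank_le_of_automorphism (H : LieSubalgebra ℂ L) [H.IsCartanSubalgebra]
    (α : L ≃ₗ⁅ℂ⁆ L) {k : ℕ} (hk : 1 ≤ k)
    (hα : (α.toLinearEquiv.toLinearMap : End ℂ L) ^ k = 1) :
    finrank ℂ L ≤ k * (finrank ℂ (End.eigenspace (α.toLinearEquiv.toLinearMap : End ℂ L) 1) +
      finrank ℂ H) := by
  classical
  set f : End ℂ L := α.toLinearEquiv.toLinearMap with hf
  have hss : f.IsSemisimple := by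
    refine Module.End.isSemisimple_of_squarefree_aeval_eq_zero
      (p := (Polynomial.X ^ k - 1 : Polynomial ℂ)) ?_ (by simp [hα])
    exact (Polynomial.X_pow_sub_one_separable_iff.mpr
      (by exact_mod_cast (by omega : k ≠ 0))).squarefree
  let F : Finset ℂ := Polynomial.nthRootsFinset k (1 : ℂ)
  have hF : ∀ a ∈ F, a ^ k = 1 := fun a ha => (Polynomial.mem_nthRootsFinset (by omega) _).mp ha
  have htop : (⊤ : Submodule ℂ L) ≤ F.sup fun a => f.eigenspace a := by
    rw [← hss.iSup_eigenspace_eq_top]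
    refine iSup_le fun a => ?_
    by_cases hne : f.eigenspace a = ⊥
    · rw [hne]; exact bot_le
    refine Finset.le_sup (f := fun a => f.eigenspace a) ?_
    obtain ⟨v, hv, hv0⟩ := Submodule.exists_mem_ne_zero_of_ne_bot hne
    rw [Polynomial.mem_nthRootsFinset (by omega)]
    have h1 : (f ^ k) v = a ^ k • v :=
      Module.End.HasEigenvector.pow_apply ⟨hv, hv0⟩ k
    rw [hα, Module.End.one_apply] at h1
    have h2 : (a ^ k - 1) • v = 0 := by rw [sub_smul, ← h1, one_smul, sub_self]
    exact sub_eq_zero.mp ((smul_eq_zero.mp h2).resolve_right hv0)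
  have hsum : ∀ G : Finset ℂ, finrank ℂ (G.sup fun a => f.eigenspace a : Submodule ℂ L) ≤
      ∑ a ∈ G, finrank ℂ (f.eigenspace a) := by
    intro G
    induction G using Finset.induction_on with
    | empty => simp
    | insert a G ha ih =>
      rw [Finset.sup_insert, Finset.sum_insert ha]
      exact (Submodule.finrank_add_le_finrank_add_finrank _ _).trans (by gcongr)
  have hcard : F.card ≤ k := by
    refine (Multiset.toFinset_card_le _).trans (Polynomial.card_nthRoots k 1)
  calc finrank ℂ L = finrank ℂ (⊤ : Submodule ℂ L) := (finrank_top ℂ L).symm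
    _ ≤ _ := Submodule.finrank_mono htop
    _ ≤ _ := hsum F
    _ ≤ ∑ a ∈ F, (finrank ℂ (f.eigenspace 1) + finrank ℂ H) := by
      refine Finset.sum_le_sum fun a ha => ?_
      have := finrank_eigenspace_inv_le H α hk hα (μ := a⁻¹) (by rw [inv_pow, hF a ha, inv_one])
      rwa [inv_inv] at this
    _ ≤ _ := by rw [Finset.sum_const, smul_eq_mul]; gcongr
end

/-- If `𝔤` is a finite-dimensional complex semisimple Lie algebra with Cartan subalgebra
`𝔥` and `α` is an automorphism of `𝔤` with `α ^ k = id` (`k ≥ 1`), then the fixed-point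
subalgebra satisfies `dim 𝔤^α ≥ (dim 𝔤)/k − (3/2)·dim 𝔥`, stated integrally as
`2·dim 𝔤 ≤ 2k·dim 𝔤^α + 3k·dim 𝔥`. -/
theorem finrank_fixed_points_of_automorphism
    (L : Type*) [LieRing L] [LieAlgebra ℂ L] [Module.Finite ℂ L]
    [LieAlgebra.IsSemisimple ℂ L]
    (H : LieSubalgebra ℂ L) [H.IsCartanSubalgebra]
    (k : ℕ) (hk : 1 ≤ k) (α : L ≃ₗ⁅ℂ⁆ L) (hα : ∀ x : L, (⇑α)^[k] x = x) :
    2 * Module.finrank ℂ L ≤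
      2 * k * Module.finrank ℂ
        (LinearMap.ker (α.toLieHom.toLinearMap - (LinearMap.id : L →ₗ[ℂ] L))) +
      3 * k * Module.finrank ℂ H := by
  have hα' : (α.toLinearEquiv.toLinearMap : End ℂ L) ^ k = 1 := by
    ext x
    rw [Module.End.pow_apply]
    exact hα x
  have h1 := finrank_le_of_automorphism H α hk hα'
  have h2 : End.eigenspace (α.toLinearEquiv.toLinearMap : End ℂ L) 1 =
      LinearMap.ker (α.toLieHom.toLinearMap - (LinearMap.id : L →ₗ[ℂ] L)) := by
    ext x
    rw [Module.End.mem_eigenspace_iff, LinearMap.mem_ker, LinearMap.sub_apply, sub_eq_zero,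
      one_smul]
    rfl
  rw [h2] at h1
  nlinarith [Nat.zero_le (k * finrank ℂ H)]
end

section
/- There exist even permutations x₁, x₂, x₃ of a 14-element set, of orders 2, 4 and 6 respectively, such that x₁·x₂·x₃ is the identity and x₁, x₂, x₃ generate the alternating group A₁₄ (i.e., the subgroup they generate is the full alternating group on 14 letters). -/
/-!
The witnesses are the permutations `a`, `b`, `c` of cycle types `2⁶1²`, `4³2`, `6²1²`, with
`a * b * c = 1`; orders and parity are finite checks. Let `G` be the group they generate.

* The word `a b a b⁻¹ a b b` is a 13-cycle fixing the single point `3`, and `a` moves `3`. Hence `G`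
  is transitive, and a block containing `3` is stable under the 13-cycle, so it is `{3}` or
  everything. Thus `G` is primitive.
* The word `a b b` has cycle type `11·3`, so its 11th power is a 3-cycle in `G`.

Jordan's theorem (a primitive group containing a 3-cycle contains the alternating group) finishes.
-/

namespace Gamma246

open Equiv MulAction
open scoped Pointwise

/-- The involution `(1 2)(3 4)(5 6)(7 8)(9 10)(11 12)`, with letters shifted down by one. -/
def a : Perm (Fin 14) where
  toFun := ![1, 0, 3, 2, 5, 4, 7, 6, 9, 8, 11, 10, 12, 13]
  invFun := ![1, 0, 3, 2, 5, 4, 7, 6, 9, 8, 11, 10, 12, 13]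
  left_inv := by decide
  right_inv := by decide

/-- `(1 10 9 8)(2 14 13 3)(4 5)(6 7 12 11)`, with letters shifted down by one. -/
def b : Perm (Fin 14) where
  toFun := ![9, 13, 1, 4, 3, 6, 11, 0, 7, 8, 5, 10, 2, 12]
  invFun := ![7, 2, 12, 4, 3, 10, 5, 8, 9, 0, 11, 6, 13, 1]
  left_inv := by decide
  right_inv := by decide

/-- `(1 3 5 11 7 9)(2 8 6 4 13 14)`, with letters shifted down by one. -/
def c : Perm (Fin 14) where
  toFun := ![2, 7, 4, 12, 10, 3, 8, 5, 0, 9, 6, 11, 13, 1]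
  invFun := ![8, 13, 0, 5, 2, 7, 10, 1, 6, 9, 4, 11, 3, 12]
  left_inv := by decide
  right_inv := by decide

/-- The 13-cycle `a b a b⁻¹ a b b`, which fixes only the point `3`. -/
def w : Perm (Fin 14) where
  toFun := ![13, 12, 8, 3, 11, 4, 1, 6, 5, 2, 9, 0, 10, 7]
  invFun := ![11, 6, 9, 3, 5, 8, 7, 13, 2, 10, 12, 4, 1, 0]
  left_inv := by decide
  right_inv := by decide

/-- The 3-cycle `(a b b) ^ 11`. -/
def t : Perm (Fin 14) where
  toFun := ![0, 1, 3, 13, 4, 5, 6, 7, 8, 9, 10, 11, 12, 2]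
  invFun := ![0, 1, 13, 2, 4, 5, 6, 7, 8, 9, 10, 11, 12, 3]
  left_inv := by decide
  right_inv := by decide

theorem w_eq : w = a * b * a * b⁻¹ * a * b * b := by decide +kernel

theorem t_eq : t = (a * b * b) ^ 11 := by decide +kernel

theorem isThreeCycle_t : t.IsThreeCycle := by
  rw [← card_support_eq_three_iff]
  decide +kernel

theorem isCycle_w : w.IsCycle := by
  have h : ∀ y, w y ≠ y → ∃ k : Fin 13, (w ^ (k : ℕ)) 0 = y := by decide +kernel
  refine ⟨0, by decide, fun y hy => ?_⟩
  obtain ⟨k, hk⟩ := h y hy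
  exact ⟨(k : ℕ), by simpa using hk⟩

theorem w_apply_ne {x : Fin 14} (hx : x ≠ 3) : w x ≠ x := by
  revert x
  decide +kernel

theorem isPreprimitive {G : Subgroup (Perm (Fin 14))} (ha : a ∈ G) (hw : w ∈ G) :
    IsPreprimitive G (Fin 14) := by
  have htrans : IsPretransitive G (Fin 14) := by
    rw [isPretransitive_iff_base (3 : Fin 14)]
    intro y
    by_cases hy : y = 3
    · exact ⟨1, by simp [hy]⟩
    · obtain ⟨k, hk⟩ := isCycle_w.exists_pow_eq (x := a 3) (by decide) (w_apply_ne hy)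
      exact ⟨⟨w, hw⟩ ^ k * ⟨a, ha⟩, hk⟩
  refine IsPreprimitive.of_isTrivialBlock_base 3 fun {B} h3 hB => ?_
  -- The cycle fixes `3 ∈ B`, so `B` meets its translate and is stable.
  have hstab : (⟨w, hw⟩ : G) • B = B :=
    hB.smul_eq_of_mem (g := ⟨w, hw⟩) h3 (show w 3 ∈ B from h3)
  have hpow : ∀ k : ℕ, ∀ x ∈ B, (w ^ k) x ∈ B := by
    intro k x hx
    induction k with
    | zero => exact hx
    | succ k ih =>
      rw [pow_succ', ← hstab]
      exact Set.smul_mem_smul_set ih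
  by_cases h : ∃ x ∈ B, x ≠ 3
  · obtain ⟨x, hx, hx3⟩ := h
    refine Or.inr (Set.eq_univ_of_forall fun y => ?_)
    by_cases hy : y = 3
    · exact hy ▸ h3
    · obtain ⟨k, hk⟩ := isCycle_w.exists_pow_eq (w_apply_ne hx3) (w_apply_ne hy)
      exact hk ▸ hpow k x hx
  · push Not at h
    exact Or.inl fun x hx y hy => (h x hx).trans (h y hy).symm

theorem a_mem : a ∈ alternatingGroup (Fin 14) := by
  rw [Perm.mem_alternatingGroup]
  decide +kernel

theorem b_mem : b ∈ alternatingGroup (Fin 14) := by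
  rw [Perm.mem_alternatingGroup]
  decide +kernel

theorem c_mem : c ∈ alternatingGroup (Fin 14) := by
  rw [Perm.mem_alternatingGroup]
  decide +kernel

theorem orderOf_a : orderOf a = 2 :=
  orderOf_eq_prime (by decide +kernel) (by decide +kernel)

theorem orderOf_b : orderOf b = 4 :=
  orderOf_eq_prime_pow (p := 2) (n := 1) (by decide +kernel) (by decide +kernel)

theorem orderOf_c : orderOf c = 6 := by
  rw [orderOf_eq_iff (by norm_num)]
  refine ⟨by decide +kernel, fun m hm h0 => ?_⟩
  interval_cases m <;> decide +kernel

theorem closure_eq : Subgroup.closure {a, b, c} = alternatingGroup (Fin 14) := by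
  have ha : a ∈ Subgroup.closure {a, b, c} := Subgroup.subset_closure (by simp)
  have hb : b ∈ Subgroup.closure {a, b, c} := Subgroup.subset_closure (by simp)
  apply le_antisymm
  · rw [Subgroup.closure_le]
    rintro x (rfl | rfl | rfl)
    exacts [a_mem, b_mem, c_mem]
  · have hw : w ∈ Subgroup.closure {a, b, c} := by
      rw [w_eq]
      exact mul_mem (mul_mem (mul_mem (mul_mem (mul_mem (mul_mem ha hb) ha) (inv_mem hb)) ha) hb) hb
    have ht : t ∈ Subgroup.closure {a, b, c} := by
      rw [t_eq]
      exact pow_mem (mul_mem (mul_mem ha hb) hb) 11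
    exact Perm.alternatingGroup_le_of_isPreprimitive_of_isThreeCycle_mem
      (isPreprimitive ha hw) isThreeCycle_t ht

end Gamma246

/-- There exist even permutations `x₁, x₂, x₃` of a 14-element set, of orders 2, 4
and 6 respectively, with `x₁ * x₂ * x₃ = 1`, generating the full alternating group
`A_14`.  (Witnesses for the triangle group Gamma_2_4_6 are given in the appendix of the paper.) -/
theorem exists_generators_alternatingGroup_Gamma_2_4_6 :
    ∃ x₁ x₂ x₃ : Equiv.Perm (Fin 14),
      x₁ ∈ alternatingGroup (Fin 14) ∧
      x₂ ∈ alternatingGroup (Fin 14) ∧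
      x₃ ∈ alternatingGroup (Fin 14) ∧
      orderOf x₁ = 2 ∧ orderOf x₂ = 4 ∧ orderOf x₃ = 6 ∧
      x₁ * x₂ * x₃ = 1 ∧
      Subgroup.closure {x₁, x₂, x₃} = alternatingGroup (Fin 14) := by
  exact ⟨Gamma246.a, Gamma246.b, Gamma246.c, Gamma246.a_mem, Gamma246.b_mem, Gamma246.c_mem,
    Gamma246.orderOf_a, Gamma246.orderOf_b, Gamma246.orderOf_c, by decide +kernel,
    Gamma246.closure_eq⟩
end

section
/- There exist even permutations x₁, x₂, x₃ of a 14-element set, of orders 2, 6 and 6 respectively, such that x₁·x₂·x₃ is the identity and x₁, x₂, x₃ generate the alternating group A₁₄ (i.e., the subgroup they generate is the full alternating group on 14 letters). -/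
/-!
The group `G` generated by the three witnesses contains two decisive elements. Writing
`c = x₁x₂x₁x₂x₁x₂⁻¹`, the permutation `c` is a 13-cycle fixing one point `p`; since `x₁` moves `p`,
`G` is transitive, and since the stabilizer of `p` is transitive on the other 13 points, `G` is
2-transitive, hence primitive (`isPreprimitive_genSubgroup`). On the other hand `x₁x₂²` has cycle
type `(8, 3, 2, 1)`, so its eighth power is a 3-cycle. Jordan's theorem, that a primitive
permutation group containing a 3-cycle contains the alternating group, then gives `A₁₄ ≤ G`; the
reverse inclusion holds because the generators are even.

The letters `1, …, 14` become `0, …, 13`.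
-/

namespace Gamma266

open Equiv

/-- `(1 2)(3 4)(5 6)(7 8)(9 10)(11 12)`, on letters shifted to start from `0`. -/
def x₁ : Perm (Fin 14) where
  toFun := ![1, 0, 3, 2, 5, 4, 7, 6, 9, 8, 11, 10, 12, 13]
  invFun := ![1, 0, 3, 2, 5, 4, 7, 6, 9, 8, 11, 10, 12, 13]
  left_inv := by decide
  right_inv := by decide

/-- `(1 14 8 7 4 2)(3 5 13 11 9 6)`, on letters shifted to start from `0`. -/
def x₂ : Perm (Fin 14) where
  toFun := ![13, 0, 4, 1, 12, 2, 3, 6, 5, 9, 8, 11, 10, 7]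
  invFun := ![1, 3, 5, 6, 2, 8, 7, 13, 10, 9, 12, 11, 4, 0]
  left_inv := by decide
  right_inv := by decide

/-- `(1 4 6 3 7 14)(5 9 10 11 12 13)`, on letters shifted to start from `0`. -/
def x₃ : Perm (Fin 14) where
  toFun := ![3, 1, 6, 5, 8, 2, 13, 7, 9, 10, 11, 12, 4, 0]
  invFun := ![13, 1, 5, 0, 12, 3, 2, 7, 4, 8, 9, 10, 11, 6]
  left_inv := by decide
  right_inv := by decide

/-- The group generated by the three witnesses. -/
def genSubgroup : Subgroup (Perm (Fin 14)) := Subgroup.closure {x₁, x₂, x₃}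

lemma x₁_mem : x₁ ∈ genSubgroup := Subgroup.subset_closure (by simp)

lemma x₂_mem : x₂ ∈ genSubgroup := Subgroup.subset_closure (by simp)

/-- A 13-cycle fixing the point `10`. -/
def c : Perm (Fin 14) := x₁ * x₂ * x₁ * x₂ * x₁ * x₂⁻¹

lemma c_mem : c ∈ genSubgroup := by
  unfold c
  have h₁ := x₁_mem
  have h₂ := x₂_mem
  exact mul_mem (mul_mem (mul_mem (mul_mem (mul_mem h₁ h₂) h₁) h₂) h₁) (inv_mem h₂)

lemma c_fix : c 10 = 10 := by decide

lemma c_pow_fix (k : ℕ) : (c ^ k) 10 = 10 :=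
  Perm.pow_apply_eq_self_of_apply_eq_self c_fix k

/-- Every point other than `10` is moved to `11` by a power of `c`. -/
lemma c_reach : ∀ a : Fin 14, a ≠ 10 → ∃ k : Fin 13, (c ^ (k : ℕ)) a = 11 := by
  decide +kernel

/-- Any pair of distinct points can be moved to `(10, 11)`: bring the first point to `10` using
powers of `c` and `x₁`, then the second to `11` using a power of `c`, which fixes `10`. -/
lemma exists_to_base {a b : Fin 14} (hab : a ≠ b) :
    ∃ g ∈ genSubgroup, g a = 10 ∧ g b = 11 := by
  obtain ⟨g, hg, hga⟩ : ∃ g ∈ genSubgroup, g a = 10 := by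
    by_cases ha : a = 10
    · exact ⟨1, one_mem _, by simpa using ha⟩
    · obtain ⟨k, hk⟩ := c_reach a ha
      refine ⟨x₁ * c ^ (k : ℕ), mul_mem x₁_mem (pow_mem c_mem _), ?_⟩
      rw [Perm.mul_apply, hk]
      decide
  obtain ⟨k, hk⟩ := c_reach (g b) (fun h => hab (g.injective (hga.trans h.symm)))
  refine ⟨c ^ (k : ℕ) * g, mul_mem (pow_mem c_mem _) hg, ?_, ?_⟩
  · rw [Perm.mul_apply, hga, c_pow_fix]
  · rw [Perm.mul_apply, hk]

lemma isPreprimitive_genSubgroup : MulAction.IsPreprimitive genSubgroup (Fin 14) := by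
  apply MulAction.isPreprimitive_of_is_two_pretransitive
  rw [MulAction.is_two_pretransitive_iff]
  intro a b d e hab hde
  obtain ⟨g, hg, hga, hgb⟩ := exists_to_base hab
  obtain ⟨h, hh, hhd, hhe⟩ := exists_to_base hde
  refine ⟨⟨h⁻¹ * g, mul_mem (inv_mem hh) hg⟩, ?_, ?_⟩
  · change (h⁻¹ * g) a = d
    rw [Perm.mul_apply, hga, Perm.inv_eq_iff_eq, hhd]
  · change (h⁻¹ * g) b = e
    rw [Perm.mul_apply, hgb, Perm.inv_eq_iff_eq, hhe]

lemma isThreeCycle_pow : ((x₁ * x₂ ^ 2) ^ 8).IsThreeCycle := by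
  rw [← card_support_eq_three_iff]
  decide +kernel

lemma x₁_even : x₁ ∈ alternatingGroup (Fin 14) := by
  rw [Perm.mem_alternatingGroup]
  decide +kernel

lemma x₂_even : x₂ ∈ alternatingGroup (Fin 14) := by
  rw [Perm.mem_alternatingGroup]
  decide +kernel

lemma x₃_even : x₃ ∈ alternatingGroup (Fin 14) := by
  rw [Perm.mem_alternatingGroup]
  decide +kernel

lemma orderOf_eq_six {g : Perm (Fin 14)} (h6 : g ^ 6 = 1) (h3 : g ^ 3 ≠ 1) (h2 : g ^ 2 ≠ 1) :
    orderOf g = 6 := by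
  rw [orderOf_eq_iff (by norm_num)]
  refine ⟨h6, fun m hm hm0 h => ?_⟩
  interval_cases m
  · exact h2 (by rw [pow_one] at h; simp [h])
  · exact h2 h
  · exact h3 h
  · exact h2 (by
      calc g ^ 2 = g ^ 6 * (g ^ 4)⁻¹ := by group
        _ = 1 := by rw [h6, h]; simp)
  · exact h2 (by
      have h1 : g = 1 := by
        calc g = g ^ 6 * (g ^ 5)⁻¹ := by group
          _ = 1 := by rw [h6, h]; simp
      simp [h1])

theorem genSubgroup_eq : genSubgroup = alternatingGroup (Fin 14) := by
  apply le_antisymm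
  · rw [genSubgroup, Subgroup.closure_le]
    rintro g (rfl | rfl | rfl)
    exacts [x₁_even, x₂_even, x₃_even]
  · exact Perm.alternatingGroup_le_of_isPreprimitive_of_isThreeCycle_mem
      isPreprimitive_genSubgroup isThreeCycle_pow
      (pow_mem (mul_mem x₁_mem (pow_mem x₂_mem 2)) 8)

end Gamma266

/-- There exist even permutations `x₁, x₂, x₃` of a 14-element set, of orders 2, 6
and 6 respectively, with `x₁ * x₂ * x₃ = 1`, generating the full alternating group
`A_14`.  (Witnesses for the triangle group Gamma_2_6_6 are given in the appendix of the paper.) -/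
theorem exists_generators_alternatingGroup_Gamma_2_6_6 :
    ∃ x₁ x₂ x₃ : Equiv.Perm (Fin 14),
      x₁ ∈ alternatingGroup (Fin 14) ∧
      x₂ ∈ alternatingGroup (Fin 14) ∧
      x₃ ∈ alternatingGroup (Fin 14) ∧
      orderOf x₁ = 2 ∧ orderOf x₂ = 6 ∧ orderOf x₃ = 6 ∧
      x₁ * x₂ * x₃ = 1 ∧
      Subgroup.closure {x₁, x₂, x₃} = alternatingGroup (Fin 14) := by
  refine ⟨Gamma266.x₁, Gamma266.x₂, Gamma266.x₃, Gamma266.x₁_even, Gamma266.x₂_even,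
    Gamma266.x₃_even, ?_, ?_, ?_, ?_, Gamma266.genSubgroup_eq⟩
  · exact orderOf_eq_prime (by decide +kernel) (by decide +kernel)
  · exact Gamma266.orderOf_eq_six (by decide +kernel) (by decide +kernel) (by decide +kernel)
  · exact Gamma266.orderOf_eq_six (by decide +kernel) (by decide +kernel) (by decide +kernel)
  · decide +kernel
end

section
/- There exist even permutations x₁, x₂, x₃ of a 12-element set, of orders 3, 6 and 6 respectively, such that x₁·x₂·x₃ is the identity and x₁, x₂, x₃ generate the alternating group A₁₂ (i.e., the subgroup they generate is the full alternating group on 12 letters). -/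
/-!
The witnesses differ from those usually quoted for this triangle group: they are chosen so that
generation of `A₁₂` is visible at once. With `x₂` of cycle type `3·2⁴·1`, the square `x₂²` is a
3-cycle, and `x₁⁻¹ * x₂` is an 11-cycle fixing the point `9`.

The 11-cycle makes the generated group `H` primitive (`isPreprimitive_of_forall_zpow`): a block
containing the fixed point is invariant under the 11-cycle, so it is a singleton or everything;
and `H` does not fix `9`, so it is also transitive. Jordan's theorem says that a primitive group
containing a 3-cycle contains the alternating group; the other inclusion is evenness of the
generators.
-/

open Equiv MulAction
open scoped Pointwise

namespace Gamma366

/-- Generator of order 3, cycle type `3⁴`. -/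
def g₁ : Perm (Fin 12) := c[0, 1, 2] * c[3, 4, 5] * c[6, 7, 8] * c[9, 10, 11]

/-- Generator of order 6, cycle type `3·2⁴·1`. -/
def g₂ : Perm (Fin 12) := c[0, 7] * c[1, 5] * c[2, 11] * c[4, 8] * c[6, 9, 10]

/-- The inverse of `g₁ * g₂`, of order 6 and cycle type `6²`. -/
def g₃ : Perm (Fin 12) := c[0, 11, 9, 2, 5, 8] * c[1, 7, 10, 6, 4, 3]

/-- A permutation group is primitive if it moves some point `a` and contains an element `w` that
fixes `a` and permutes the other points transitively. -/
lemma isPreprimitive_of_forall_zpow {α : Type*} {H : Subgroup (Perm α)} {w h : Perm α} {a : α}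
    (hw : w ∈ H) (hh : h ∈ H) (hwa : w a = a) (hha : h a ≠ a)
    (htrans : ∀ b c, b ≠ a → c ≠ a → ∃ k : ℤ, (w ^ k) b = c) :
    IsPreprimitive H α := by
  refine IsPreprimitive.of_isTrivialBlock_of_notMem_fixedPoints (a := a)
    (fun hfix => hha (hfix ⟨h, hh⟩)) fun B haB hB => ?_
  refine or_iff_not_imp_left.mpr fun hns => ?_
  obtain ⟨b, hbB, hba⟩ := (Set.not_subsingleton_iff.mp hns).exists_ne a
  refine Set.eq_univ_of_forall fun c => ?_
  by_cases hca : c = a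
  · exact hca ▸ haB
  obtain ⟨k, rfl⟩ := htrans b c hba hca
  have hfix : (w ^ k) a = a := Perm.zpow_apply_eq_self_of_apply_eq_self hwa k
  -- The block is stable under `w ^ k`, which maps its point `a` into it.
  have hstable : (⟨w ^ k, H.zpow_mem hw k⟩ : H) • B = B :=
    hB.smul_eq_of_mem haB (show (w ^ k) a ∈ B from hfix.symm ▸ haB)
  exact hstable ▸ Set.smul_mem_smul_set hbB

lemma isThreeCycle_g₂_sq : (g₂ ^ 2).IsThreeCycle := by
  rw [← card_support_eq_three_iff]
  decide +kernel

lemma exists_pow_apply_eq (b c : Fin 12) (hb : b ≠ 9) (hc : c ≠ 9) :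
    ∃ k : ℤ, ((g₁⁻¹ * g₂) ^ k) b = c := by
  have hpow : ∀ b c : Fin 12, b ≠ 9 → c ≠ 9 →
      ∃ k : Fin 11, ((g₁⁻¹ * g₂) ^ (k : ℕ)) b = c := by
    decide +kernel
  obtain ⟨k, hk⟩ := hpow b c hb hc
  exact ⟨(k : ℕ), by rwa [zpow_natCast]⟩

end Gamma366

open Gamma366 in
/-- There exist even permutations `x₁, x₂, x₃` of a 12-element set, of orders 3, 6
and 6 respectively, with `x₁ * x₂ * x₃ = 1`, generating the full alternating group
`A_12`.  (Witnesses for the triangle group Gamma_3_6_6 are given in the appendix of the paper.) -/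
theorem exists_generators_alternatingGroup_Gamma_3_6_6 :
    ∃ x₁ x₂ x₃ : Equiv.Perm (Fin 12),
      x₁ ∈ alternatingGroup (Fin 12) ∧
      x₂ ∈ alternatingGroup (Fin 12) ∧
      x₃ ∈ alternatingGroup (Fin 12) ∧
      orderOf x₁ = 3 ∧ orderOf x₂ = 6 ∧ orderOf x₃ = 6 ∧
      x₁ * x₂ * x₃ = 1 ∧
      Subgroup.closure {x₁, x₂, x₃} = alternatingGroup (Fin 12) := by
  have h₁ : g₁ ∈ alternatingGroup (Fin 12) := by
    rw [Perm.mem_alternatingGroup]; decide +kernel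
  have h₂ : g₂ ∈ alternatingGroup (Fin 12) := by
    rw [Perm.mem_alternatingGroup]; decide +kernel
  have h₃ : g₃ ∈ alternatingGroup (Fin 12) := by
    rw [Perm.mem_alternatingGroup]; decide +kernel
  refine ⟨g₁, g₂, g₃, h₁, h₂, h₃, ?_, ?_, ?_, by decide +kernel, le_antisymm ?_ ?_⟩
  · exact (orderOf_eq_iff (by norm_num)).mpr (by decide +kernel)
  · exact (orderOf_eq_iff (by norm_num)).mpr (by decide +kernel)
  · exact (orderOf_eq_iff (by norm_num)).mpr (by decide +kernel)
  · rw [Subgroup.closure_le]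
    rintro x (rfl | rfl | rfl)
    exacts [h₁, h₂, h₃]
  · have m₁ : g₁ ∈ Subgroup.closure {g₁, g₂, g₃} := Subgroup.subset_closure (by simp)
    have m₂ : g₂ ∈ Subgroup.closure {g₁, g₂, g₃} := Subgroup.subset_closure (by simp)
    have hprim : IsPreprimitive (Subgroup.closure {g₁, g₂, g₃}) (Fin 12) :=
      isPreprimitive_of_forall_zpow (mul_mem (inv_mem m₁) m₂) m₁ (a := 9)
        (by decide +kernel) (by decide +kernel) exists_pow_apply_eq
    exact Perm.alternatingGroup_le_of_isPreprimitive_of_isThreeCycle_mem hprim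
      isThreeCycle_g₂_sq (pow_mem m₂ 2)
end

section
/- There exist even permutations x₁, x₂, x₃ of a 14-element set, of orders 3, 4 and 4 respectively, such that x₁·x₂·x₃ is the identity and x₁, x₂, x₃ generate the alternating group A₁₄ (i.e., the subgroup they generate is the full alternating group on 14 letters). -/
/-!
The witnesses are explicit products of disjoint cycles, so membership in `A₁₄`, the orders and the
relation `x₁ x₂ x₃ = 1` are finite checks. Let `H` be the group they generate. The element
`w = x₁ x₂²` has cycle type `(3, 11)`; hence `H` contains the 3-cycle `w ^ 11 = (2 3 5)`, and
`w ^ 3`, an 11-cycle on the complement of `{2, 3, 5}`. By Jordan's theorem it suffices that `H` is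
primitive, which is `isTrivialBlock_of_two_mem`: a block containing `2` and another point must
contain the whole support of `w ^ 3`, and then `x₁` forces `3` and `5` into it.
-/

open MulAction Equiv Equiv.Perm
open scoped Pointwise

namespace Gamma344

/-- The generator of order 3, on the letters `0, …, 13`. -/
def x₁ : Perm (Fin 14) := c[0, 1, 2] * c[3, 4, 5] * c[6, 7, 8] * c[9, 10, 11]

/-- The first generator of order 4. -/
def x₂ : Perm (Fin 14) := c[0, 13, 10, 11] * c[1, 2, 3, 4] * c[6, 9, 12, 8] * c[5, 7]

/-- The second generator of order 4. -/
def x₃ : Perm (Fin 14) := c[0, 1, 11, 13] * c[2, 4] * c[3, 7, 8, 5] * c[6, 12, 9, 10]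

/-- An element of cycle type `(3, 11)`, whose 3-cycle permutes `{2, 3, 5}`. -/
def w : Perm (Fin 14) := x₁ * x₂ ^ 2

/-- The group generated by the three witnesses. -/
def H : Subgroup (Perm (Fin 14)) := Subgroup.closure {x₁, x₂, x₃}

lemma x₁_mem : x₁ ∈ H := Subgroup.subset_closure (by simp)

lemma x₁_values : x₁ 0 = 1 ∧ x₁ 3 = 4 ∧ x₁ 4 = 5 ∧ x₁ 5 = 3 := by decide +kernel

lemma w_mem : w ∈ H :=
  mul_mem x₁_mem (pow_mem (Subgroup.subset_closure (by simp)) 2)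

lemma isThreeCycle_w_pow : IsThreeCycle (w ^ 11) := by
  have h : w ^ 11 = swap 2 5 * swap 2 3 := by decide +kernel
  rw [h]
  exact isThreeCycle_swap_mul_swap_same (by decide) (by decide) (by decide)

/-- If `h ∈ H` maps some point of a block back into the block, it preserves the block. -/
lemma apply_mem_block {B : Set (Fin 14)} (hB : IsBlock H B) {h : Perm (Fin 14)} (hh : h ∈ H)
    {a : Fin 14} (ha : a ∈ B) (hha : h a ∈ B) {b : Fin 14} (hb : b ∈ B) : h b ∈ B := by
  have key : (⟨h, hh⟩ : H) • B = B := hB.smul_eq_of_mem (g := ⟨h, hh⟩) ha hha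
  rw [← key]
  exact ⟨b, hb, rfl⟩

lemma isTrivialBlock_of_two_mem ⦃B : Set (Fin 14)⦄ (h2 : 2 ∈ B) (hB : IsBlock H B) :
    IsTrivialBlock B := by
  obtain ⟨e01, e34, e45, e53⟩ := x₁_values
  -- `w ^ 3` fixes `2`, hence preserves `B`.
  have hc (k : ℕ) {b : Fin 14} (hb : b ∈ B) : ((w ^ 3) ^ k) b ∈ B := by
    refine apply_mem_block hB (pow_mem (pow_mem w_mem 3) k) h2 ?_ hb
    have h : (w ^ 3) 2 = 2 := by decide +kernel
    rwa [pow_apply_eq_self_of_apply_eq_self h]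
  have huniv (h4 : 4 ∈ B) : B = Set.univ := by
    have hsupp (y : Fin 14) (h3 : y ≠ 3) (h5 : y ≠ 5) : y ∈ B := by
      have h : ∀ y : Fin 14, y ≠ 3 → y ≠ 5 → y = 2 ∨ ∃ k < 11, ((w ^ 3) ^ k) 4 = y := by
        decide +kernel
      obtain rfl | ⟨k, -, rfl⟩ := h y h3 h5
      · exact h2
      · exact hc k h4
    have hx {b : Fin 14} (hb : b ∈ B) : x₁ b ∈ B :=
      apply_mem_block hB x₁_mem (hsupp 0 (by decide) (by decide))
        (e01 ▸ hsupp 1 (by decide) (by decide)) hb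
    -- `x₁` contains the cycle `(3 4 5)`.
    have h5 : (5 : Fin 14) ∈ B := e45 ▸ hx h4
    have h3 : (3 : Fin 14) ∈ B := e53 ▸ hx h5
    refine Set.eq_univ_of_forall fun y ↦ ?_
    by_cases hy3 : y = 3
    · rwa [hy3]
    by_cases hy5 : y = 5
    · rwa [hy5]
    exact hsupp y hy3 hy5
  by_cases hsub : B.Subsingleton
  · exact Or.inl hsub
  obtain ⟨q, hq, hq2⟩ := (Set.not_subsingleton_iff.mp hsub).exists_ne 2
  refine Or.inr (huniv ?_)
  have h : ∀ q : Fin 14, q ≠ 2 →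
      (∃ k < 11, ((w ^ 3) ^ k) q = 4) ∨ ∃ k < 3, ((w ^ 11) ^ k) 2 = q ∧
        (q = 3 ∧ ((w ^ 11) ^ k) q = 5 ∨ q = 5 ∧ ((w ^ 11) ^ k) q = 3) := by
    decide +kernel
  obtain ⟨k, -, hk⟩ | ⟨k, -, hk, hk'⟩ := h q hq2
  · exact hk ▸ hc k hq
  · -- Here `q ∈ {3, 5}`, and a power of the 3-cycle `(2 3 5)` sends `2` to `q`.
    have hr : ((w ^ 11) ^ k) q ∈ B :=
      apply_mem_block hB (pow_mem (pow_mem w_mem 11) k) h2 (hk ▸ hq) hq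
    have h35 : (3 : Fin 14) ∈ B ∧ (5 : Fin 14) ∈ B := by
      rcases hk' with ⟨rfl, h⟩ | ⟨rfl, h⟩
      · exact ⟨hq, h ▸ hr⟩
      · exact ⟨h ▸ hr, hq⟩
    -- `x₁` maps `5` to `3`, hence preserves `B`, and maps `3` to `4`.
    exact e34 ▸ apply_mem_block hB x₁_mem h35.2 (e53 ▸ h35.1) h35.1

lemma isPreprimitive_H : IsPreprimitive H (Fin 14) := by
  refine IsPreprimitive.of_isTrivialBlock_of_notMem_fixedPoints (a := 2) (fun h ↦ ?_)
    isTrivialBlock_of_two_mem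
  have h' : x₁ 2 = 2 := h ⟨x₁, x₁_mem⟩
  exact absurd h' (by decide)

end Gamma344

/-- There exist even permutations `x₁, x₂, x₃` of a 14-element set, of orders 3, 4
and 4 respectively, with `x₁ * x₂ * x₃ = 1`, generating the full alternating group
`A_14`.  (Witnesses for the triangle group Gamma_3_4_4 are given in the appendix of the paper.) -/
theorem exists_generators_alternatingGroup_Gamma_3_4_4 :
    ∃ x₁ x₂ x₃ : Equiv.Perm (Fin 14),
      x₁ ∈ alternatingGroup (Fin 14) ∧
      x₂ ∈ alternatingGroup (Fin 14) ∧
      x₃ ∈ alternatingGroup (Fin 14) ∧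
      orderOf x₁ = 3 ∧ orderOf x₂ = 4 ∧ orderOf x₃ = 4 ∧
      x₁ * x₂ * x₃ = 1 ∧
      Subgroup.closure {x₁, x₂, x₃} = alternatingGroup (Fin 14) := by
  have m₁ : Gamma344.x₁ ∈ alternatingGroup (Fin 14) := by
    rw [mem_alternatingGroup]
    decide +kernel
  have m₂ : Gamma344.x₂ ∈ alternatingGroup (Fin 14) := by
    rw [mem_alternatingGroup]
    decide +kernel
  have m₃ : Gamma344.x₃ ∈ alternatingGroup (Fin 14) := by
    rw [mem_alternatingGroup]
    decide +kernel
  refine ⟨Gamma344.x₁, Gamma344.x₂, Gamma344.x₃, m₁, m₂, m₃, ?_, ?_, ?_, by decide +kernel, ?_⟩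
  · exact orderOf_eq_prime (by decide +kernel) (by decide +kernel)
  · exact orderOf_eq_prime_pow (p := 2) (n := 1) (by decide +kernel) (by decide +kernel)
  · exact orderOf_eq_prime_pow (p := 2) (n := 1) (by decide +kernel) (by decide +kernel)
  · refine le_antisymm ?_ ?_
    · rw [Subgroup.closure_le]
      rintro x (rfl | rfl | rfl)
      exacts [m₁, m₂, m₃]
    · exact alternatingGroup_le_of_isPreprimitive_of_isThreeCycle_mem Gamma344.isPreprimitive_H
        Gamma344.isThreeCycle_w_pow (pow_mem Gamma344.w_mem 11)
end

section
/- There exist even permutations x₁, x₂, x₃ of a 12-element set, of orders 2, 6 and 10 respectively, such that x₁·x₂·x₃ is the identity and x₁, x₂, x₃ generate the alternating group A₁₂ (i.e., the subgroup they generate is the full alternating group on 12 letters). -/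
/-!
The witnesses are explicit permutations `a`, `b`, `c` of `Fin 12` with `a * b * c = 1`; their
parities and orders are finite computations. Being even, they generate a subgroup `G` of the
alternating group, and the reverse inclusion is Jordan's theorem: a primitive permutation group
containing a 3-cycle contains the alternating group.

* `a * b ^ 2` has cycle type `(7, 3, 1, 1)`, so its seventh power is a 3-cycle in `G`.
* `a * b * a * b ^ 2` is an 11-cycle fixing only the point `10`. A block of `G` containing `10` is
  stable under this cycle, hence is `{10}` or everything. As `G` moves `10`, it is primitive.
-/

open Equiv MulAction
open scoped Pointwise

namespace Gamma2610

/-- The involution `(0 1)(2 3)(4 5)(6 7)(8 9)(10 11)`. -/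
def a : Perm (Fin 12) where
  toFun := ![1, 0, 3, 2, 5, 4, 7, 6, 9, 8, 11, 10]
  invFun := ![1, 0, 3, 2, 5, 4, 7, 6, 9, 8, 11, 10]
  left_inv := by decide
  right_inv := by decide

/-- The permutation `(0 7 5 6 4 2)(3 9 10)(8 11)` of order 6. -/
def b : Perm (Fin 12) where
  toFun := ![7, 1, 0, 9, 2, 6, 4, 5, 11, 10, 3, 8]
  invFun := ![2, 1, 4, 10, 6, 7, 5, 0, 11, 3, 9, 8]
  left_inv := by decide
  right_inv := by decide

/-- The permutation `(0 1 2 10 8 3 4 7 5 6)(9 11)` of order 10. -/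
def c : Perm (Fin 12) where
  toFun := ![1, 2, 10, 4, 7, 6, 0, 5, 3, 11, 8, 9]
  invFun := ![6, 0, 1, 8, 3, 7, 5, 4, 10, 11, 2, 9]
  left_inv := by decide
  right_inv := by decide

set_option maxRecDepth 100000

theorem sign_a : Perm.sign a = 1 := by decide +kernel

theorem sign_b : Perm.sign b = 1 := by decide +kernel

theorem sign_c : Perm.sign c = 1 := by decide +kernel

theorem orderOf_a : orderOf a = 2 := by
  rw [orderOf_eq_iff (by norm_num)]
  decide +kernel

theorem orderOf_b : orderOf b = 6 := by
  rw [orderOf_eq_iff (by norm_num)]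
  decide +kernel

theorem orderOf_c : orderOf c = 10 := by
  rw [orderOf_eq_iff (by norm_num)]
  decide +kernel

theorem a_mul_b_mul_c : a * b * c = 1 := by decide +kernel

theorem isThreeCycle_pow : ((a * b ^ 2) ^ 7).IsThreeCycle := by
  have h : (a * b ^ 2) ^ 7 = swap 0 1 * swap 0 4 := by decide +kernel
  rw [h]
  exact Perm.isThreeCycle_swap_mul_swap_same (by decide) (by decide) (by decide)

/-- The powers of the 11-cycle `a * b * a * b ^ 2` act transitively on the points other than
its fixed point `10`. -/
theorem elevenCycle_transitive : ∀ x y : Fin 12, x ≠ 10 → y ≠ 10 →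
    ∃ k : Fin 11, ((a * b * a * b ^ 2) ^ (k : ℕ)) x = y := by
  decide +kernel

theorem isPreprimitive {G : Subgroup (Perm (Fin 12))} (ha : a ∈ G) (hb : b ∈ G) :
    IsPreprimitive G (Fin 12) := by
  have hw : a * b * a * b ^ 2 ∈ G :=
    G.mul_mem (G.mul_mem (G.mul_mem ha hb) ha) (G.pow_mem hb 2)
  refine IsPreprimitive.of_isTrivialBlock_of_notMem_fixedPoints (a := 10) ?_ ?_
  · intro h
    exact absurd (h ⟨a, ha⟩) (by decide : a 10 ≠ 10)
  · intro B hB hblock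
    by_cases hx : ∃ x ∈ B, x ≠ 10
    · right
      obtain ⟨x, hxB, hx⟩ := hx
      refine Set.eq_univ_of_forall fun y => ?_
      by_cases hy : y = 10
      · exact hy ▸ hB
      obtain ⟨k, rfl⟩ := elevenCycle_transitive x y hx hy
      let g : G := ⟨(a * b * a * b ^ 2) ^ (k : ℕ), G.pow_mem hw _⟩
      have hfix : g • (10 : Fin 12) = 10 :=
        (by decide +kernel : ∀ k : Fin 11, ((a * b * a * b ^ 2) ^ (k : ℕ)) 10 = 10) k
      -- `g • B` meets `B` in the fixed point `10`, so the two coincide.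
      have hgB : g • B = B := hblock.smul_eq_of_mem hB (hfix.symm ▸ hB)
      rw [← hgB]
      exact Set.smul_mem_smul_set (a := g) hxB
    · left
      push Not at hx
      intro x hxB y hyB
      rw [hx x hxB, hx y hyB]

end Gamma2610


/-- There exist even permutations `x₁, x₂, x₃` of a 12-element set, of orders 2, 6
and 10 respectively, with `x₁ * x₂ * x₃ = 1`, generating the full alternating group
`A_12`.  (Witnesses for the triangle group Gamma_2_6_10 are given in the appendix of the paper.) -/
theorem exists_generators_alternatingGroup_Gamma_2_6_10 :
    ∃ x₁ x₂ x₃ : Equiv.Perm (Fin 12),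
      x₁ ∈ alternatingGroup (Fin 12) ∧
      x₂ ∈ alternatingGroup (Fin 12) ∧
      x₃ ∈ alternatingGroup (Fin 12) ∧
      orderOf x₁ = 2 ∧ orderOf x₂ = 6 ∧ orderOf x₃ = 10 ∧
      x₁ * x₂ * x₃ = 1 ∧
      Subgroup.closure {x₁, x₂, x₃} = alternatingGroup (Fin 12) := by
  open Gamma2610 in
  refine ⟨a, b, c, Perm.mem_alternatingGroup.2 sign_a, Perm.mem_alternatingGroup.2 sign_b,
    Perm.mem_alternatingGroup.2 sign_c, orderOf_a, orderOf_b, orderOf_c, a_mul_b_mul_c,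
    le_antisymm ?_ ?_⟩
  · rw [Subgroup.closure_le]
    rintro _ (rfl | rfl | rfl)
    exacts [Perm.mem_alternatingGroup.2 sign_a, Perm.mem_alternatingGroup.2 sign_b,
      Perm.mem_alternatingGroup.2 sign_c]
  · have ha : a ∈ Subgroup.closure {a, b, c} := Subgroup.subset_closure (by simp)
    have hb : b ∈ Subgroup.closure {a, b, c} := Subgroup.subset_closure (by simp)
    exact Perm.alternatingGroup_le_of_isPreprimitive_of_isThreeCycle_mem
      (isPreprimitive ha hb) isThreeCycle_pow
      (Subgroup.pow_mem _ (Subgroup.mul_mem _ ha (Subgroup.pow_mem _ hb 2)) 7)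
end

section
/- There exist even permutations x₁, x₂, x₃ of a 12-element set, of orders 4, 6 and 12 respectively, such that x₁·x₂·x₃ is the identity and x₁, x₂, x₃ generate the alternating group A₁₂ (i.e., the subgroup they generate is the full alternating group on 12 letters). -/
/-!
Take the given witnesses, with the letters `1, …, 12` renumbered `0, …, 11`. Membership in `A₁₂`,
the orders and the relation `x₁ * x₂ * x₃ = 1` are finite computations. That the subgroup `H` they
generate contains `A₁₂` is Jordan's theorem: a primitive permutation group containing a 3-cycle
contains the alternating group.

* `x₁ * x₂⁻¹` fixes `9` and permutes the other eleven points in a single cycle. As `H` also moves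
  `9`, it is 2-transitive, hence primitive (`isPreprimitive_of_gens_mem`).
* `x₁ * x₁ * x₃ * x₁⁻¹ * x₂` has cycle type `(2, 3, 4)`, so its fourth power is a 3-cycle
  (`isThreeCycle_word`).
-/

namespace Gamma4612

/-- `(1 4 3 2)(5 8 7 6)(9 10)(11 12)`, on letters shifted down by one. -/
def x₁ : Equiv.Perm (Fin 12) where
  toFun := ![3, 0, 1, 2, 7, 4, 5, 6, 9, 8, 11, 10]
  invFun := ![1, 2, 3, 0, 5, 6, 7, 4, 9, 8, 11, 10]
  left_inv := by decide
  right_inv := by decide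

/-- `(1 2 5 9 10 3)(4 7 11 8 6 12)`, on letters shifted down by one. -/
def x₂ : Equiv.Perm (Fin 12) where
  toFun := ![1, 4, 0, 6, 8, 11, 10, 5, 9, 2, 7, 3]
  invFun := ![2, 0, 9, 11, 1, 7, 3, 10, 4, 8, 6, 5]
  left_inv := by decide
  right_inv := by decide

/-- `(2 10 5 8)(3 12 7 11 6 4)`, on letters shifted down by one. -/
def x₃ : Equiv.Perm (Fin 12) where
  toFun := ![0, 9, 11, 2, 7, 3, 10, 1, 8, 4, 5, 6]
  invFun := ![0, 7, 3, 5, 9, 10, 11, 4, 8, 1, 6, 2]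
  left_inv := by decide
  right_inv := by decide

theorem x₁_mem : x₁ ∈ alternatingGroup (Fin 12) := by
  rw [Equiv.Perm.mem_alternatingGroup]
  decide +kernel

theorem x₂_mem : x₂ ∈ alternatingGroup (Fin 12) := by
  rw [Equiv.Perm.mem_alternatingGroup]
  decide +kernel

theorem x₁_mul_x₂_mul_x₃ : x₁ * x₂ * x₃ = 1 := by decide +kernel

theorem x₃_mem : x₃ ∈ alternatingGroup (Fin 12) := by
  rw [eq_inv_of_mul_eq_one_right x₁_mul_x₂_mul_x₃]
  exact inv_mem (mul_mem x₁_mem x₂_mem)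

theorem orderOf_x₁ : orderOf x₁ = 4 :=
  (orderOf_eq_iff (by norm_num)).2 (by decide +kernel)

theorem orderOf_x₂ : orderOf x₂ = 6 :=
  (orderOf_eq_iff (by norm_num)).2 (by decide +kernel)

theorem orderOf_x₃ : orderOf x₃ = 12 :=
  (orderOf_eq_iff (by norm_num)).2 (by decide +kernel)

/-- The exponent `4` kills the 2-cycle and the 4-cycle of the word and keeps its 3-cycle. -/
theorem isThreeCycle_word : ((x₁ * x₁ * x₃ * x₁⁻¹ * x₂) ^ 4).IsThreeCycle :=
  card_support_eq_three_iff.1 (by decide +kernel)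

theorem exists_pow_apply_zero (q : Fin 12) (hq : q ≠ 9) :
    ∃ i : Fin 11, ((x₁ * x₂⁻¹) ^ (i : ℕ)) 0 = q := by
  revert q
  decide +kernel

theorem isPreprimitive_of_gens_mem {H : Subgroup (Equiv.Perm (Fin 12))}
    (h₁ : x₁ ∈ H) (h₂ : x₂ ∈ H) : MulAction.IsPreprimitive H (Fin 12) := by
  have hz : x₁ * x₂⁻¹ ∈ H := mul_mem h₁ (inv_mem h₂)
  have htrans (p : Fin 12) : ∃ g ∈ H, g 9 = p := by
    by_cases hp : p = 9
    · exact ⟨1, one_mem H, hp.symm⟩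
    · obtain ⟨i, hi⟩ := exists_pow_apply_zero p hp
      -- `x₂` maps `9` to `2` and `2` to `0`.
      have h90 : (x₂ ^ 2) 9 = 0 := by decide +kernel
      exact ⟨(x₁ * x₂⁻¹) ^ (i : ℕ) * x₂ ^ 2, mul_mem (pow_mem hz _) (pow_mem h₂ _), by
        rw [Equiv.Perm.mul_apply, h90, hi]⟩
  -- The pair `(9, 0)` can be moved to every pair of distinct points.
  have hpair (p q : Fin 12) (hpq : p ≠ q) : ∃ g ∈ H, g 9 = p ∧ g 0 = q := by
    obtain ⟨g, hg, rfl⟩ := htrans p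
    have hq : g⁻¹ q ≠ 9 := by
      intro h
      exact hpq (by rw [← h]; simp)
    obtain ⟨i, hi⟩ := exists_pow_apply_zero _ hq
    have hfix : (x₁ * x₂⁻¹) 9 = 9 := by decide +kernel
    refine ⟨g * (x₁ * x₂⁻¹) ^ (i : ℕ), mul_mem hg (pow_mem hz _), ?_, ?_⟩
    · rw [Equiv.Perm.mul_apply, Equiv.Perm.pow_apply_eq_self_of_apply_eq_self hfix]
    · simp [hi]
  apply MulAction.isPreprimitive_of_is_two_pretransitive
  rw [MulAction.is_two_pretransitive_iff]
  intro a b c d hab hcd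
  obtain ⟨g, hg, rfl, rfl⟩ := hpair a b hab
  obtain ⟨k, hk, rfl, rfl⟩ := hpair c d hcd
  refine ⟨⟨k * g⁻¹, mul_mem hk (inv_mem hg)⟩, ?_, ?_⟩ <;>
    simp [Subgroup.smul_def]

end Gamma4612

/-- There exist even permutations `x₁, x₂, x₃` of a 12-element set, of orders 4, 6
and 12 respectively, with `x₁ * x₂ * x₃ = 1`, generating the full alternating group
`A_12`.  (Witnesses for the triangle group Gamma_4_6_12 are given in the appendix of the paper.) -/
theorem exists_generators_alternatingGroup_Gamma_4_6_12 :
    ∃ x₁ x₂ x₃ : Equiv.Perm (Fin 12),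
      x₁ ∈ alternatingGroup (Fin 12) ∧
      x₂ ∈ alternatingGroup (Fin 12) ∧
      x₃ ∈ alternatingGroup (Fin 12) ∧
      orderOf x₁ = 4 ∧ orderOf x₂ = 6 ∧ orderOf x₃ = 12 ∧
      x₁ * x₂ * x₃ = 1 ∧
      Subgroup.closure {x₁, x₂, x₃} = alternatingGroup (Fin 12) := by
  open Gamma4612 in
  refine ⟨x₁, x₂, x₃, x₁_mem, x₂_mem, x₃_mem, orderOf_x₁, orderOf_x₂, orderOf_x₃,
    x₁_mul_x₂_mul_x₃, le_antisymm ?_ ?_⟩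
  · rw [Subgroup.closure_le]
    rintro _ (rfl | rfl | rfl)
    exacts [Gamma4612.x₁_mem, Gamma4612.x₂_mem, Gamma4612.x₃_mem]
  · open Gamma4612 in
    have h₁ : x₁ ∈ Subgroup.closure {x₁, x₂, x₃} := Subgroup.subset_closure (by simp)
    have h₂ : x₂ ∈ Subgroup.closure {x₁, x₂, x₃} := Subgroup.subset_closure (by simp)
    have h₃ : x₃ ∈ Subgroup.closure {x₁, x₂, x₃} := Subgroup.subset_closure (by simp)
    exact Equiv.Perm.alternatingGroup_le_of_isPreprimitive_of_isThreeCycle_mem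
      (isPreprimitive_of_gens_mem h₁ h₂) isThreeCycle_word
      (pow_mem (mul_mem (mul_mem (mul_mem (mul_mem h₁ h₁) h₃) (inv_mem h₁)) h₂) 4)
end
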